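/- arXiv:1710.00298 — 2 statements merged into one kernel-verified Lean document; each statement's English description precedes it below -/
import Mathlib

section
/- If H is a 3-uniform hypergraph on n vertices with no isolated vertices, then the Staller-start game domination number satisfies γ_g'(H) ≤ (5/9)·n. -/
attribute [local instance 10] Classical.propDecidable

variable {V : Type}

/-- The closed neighborhood of a vertex in a hypergraph given by its edge set. -/
noncomputable def closedNbhd [Fintype V] (H : Finset (Finset V)) (v : V) : Finset V :=
  Finset.univ.filter (fun u => u = v ∨ ∃ e ∈ H, u ∈ e ∧ v ∈ e)

private lemma card_sdiff_union_lt [Fintype V] {S T : Finset V} (h : ¬ T ⊆ S) :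
    (Finset.univ \ (S ∪ T)).card < (Finset.univ \ S).card := by
  classical
  obtain ⟨u, huT, huS⟩ := Finset.not_subset.mp h
  apply Finset.card_lt_card
  rw [Finset.ssubset_def]
  constructor
  · exact Finset.sdiff_subset_sdiff (Finset.Subset.refl _) Finset.subset_union_left
  · intro hc
    have hu : u ∈ Finset.univ \ S := by simp [huS]
    have := hc hu
    simp [huT] at this

/-- Value of the domination game on a hypergraph: `S` is the set of vertices already
dominated, `dom = true` iff Dominator is the next player to move.  A legal move is a vertex
dominating at least one new vertex; Dominator minimizes, Staller maximizes the total
number of moves, and both play optimally. -/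
noncomputable def domGameVal [Fintype V] (H : Finset (Finset V)) (dom : Bool) (S : Finset V) :
    ℕ :=
  if h : (Finset.univ.filter fun v => ¬ closedNbhd H v ⊆ S).Nonempty then
    1 + (if dom then
        (Finset.univ.filter fun v => ¬ closedNbhd H v ⊆ S).attach.inf'
          (Finset.attach_nonempty_iff.mpr h)
          (fun v => domGameVal H false (S ∪ closedNbhd H v.1))
      else
        (Finset.univ.filter fun v => ¬ closedNbhd H v ⊆ S).attach.sup'
          (Finset.attach_nonempty_iff.mpr h)
          (fun v => domGameVal H true (S ∪ closedNbhd H v.1)))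
  else 0
termination_by (Finset.univ \ S).card
decreasing_by
  · exact card_sdiff_union_lt (Finset.mem_filter.mp v.2).2
  · exact card_sdiff_union_lt (Finset.mem_filter.mp v.2).2

/-- The game domination number (Dominator starts). -/
noncomputable def gammaGame [Fintype V] (H : Finset (Finset V)) : ℕ :=
  domGameVal H true ∅

/-- The Staller-start game domination number. -/
noncomputable def gammaGame' [Fintype V] (H : Finset (Finset V)) : ℕ :=
  domGameVal H false ∅

/-!
A vertex is white until it is dominated and blue afterwards. Give every white vertex weight `15` and
every blue vertex that still has white neighbors weight `9`. As long as some move dominates at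
least five new vertices, Dominator plays it. Afterwards no vertex has more than four white
neighbors, and a blue vertex with `k > 0` white neighbors is given weight `5 + k ≤ 9` instead, so
that the total weight does not go up. It starts at `15 n`, and Staller's first move lowers it by at
least `27`. From then on Dominator always has a move that lowers it by at least `27`, and by at
least `54` together with any reply; hence there are at most `15 n / 27 = 5 n / 9` moves.

In the second phase a white vertex has at most three white neighbors. If there is a white vertex
with three white neighbors, or a white triangle, Dominator plays one of its vertices. Otherwise
every edge between white vertices lies in a triangle with a blue third vertex, and this blue apex
supplies the missing weight both for Dominator's move and against Staller's weakest reply, the play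
of a blue vertex with a single white neighbor. When the white vertices are independent, each of them
has two blue neighbors.
-/

namespace DominationGame

open Finset

section Neighborhoods

variable {α : Type*} [Fintype α] {G : SimpleGraph α} {S T : Finset α} {u v x z : α}

/-- The closed neighborhood `N[v]` of a vertex of a graph. -/
noncomputable def closedNhd (G : SimpleGraph α) (v : α) : Finset α :=
  insert v (G.neighborFinset v)

/-- The set of dominated vertices after `v` is played in the position with dominated set `S`.
The move `v` is legal when `¬ closedNhd G v ⊆ S`. -/
noncomputable def play (G : SimpleGraph α) (S : Finset α) (v : α) : Finset α :=
  S ∪ closedNhd G v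

/-- The white, that is not yet dominated, neighbors of `v` when `S` is the set of dominated
vertices. -/
noncomputable def whiteNbrs (G : SimpleGraph α) (S : Finset α) (v : α) : Finset α :=
  G.neighborFinset v \ S

/-- The blue, that is dominated, neighbors of `v` when `S` is the set of dominated vertices. -/
noncomputable def blueNbrs (G : SimpleGraph α) (S : Finset α) (v : α) : Finset α :=
  G.neighborFinset v ∩ S

/-- The number of white neighbors of `v`. -/
noncomputable def whiteDeg (G : SimpleGraph α) (S : Finset α) (v : α) : ℕ := #(whiteNbrs G S v)

/-- The number of blue neighbors of `v`. -/
noncomputable def blueDeg (G : SimpleGraph α) (S : Finset α) (v : α) : ℕ := #(blueNbrs G S v)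

lemma mem_closedNhd : u ∈ closedNhd G v ↔ u = v ∨ G.Adj v u := by simp [closedNhd]

lemma mem_whiteNbrs : u ∈ whiteNbrs G S v ↔ G.Adj v u ∧ u ∉ S := by simp [whiteNbrs]

lemma mem_blueNbrs : u ∈ blueNbrs G S v ↔ G.Adj v u ∧ u ∈ S := by simp [blueNbrs]

lemma card_closedNhd (G : SimpleGraph α) (v : α) : #(closedNhd G v) = G.degree v + 1 := by
  simp [closedNhd, card_insert_of_notMem]

lemma subset_play (G : SimpleGraph α) (S : Finset α) (v : α) : S ⊆ play G S v :=
  subset_union_left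

lemma play_sdiff : play G S v \ S = closedNhd G v \ S := union_sdiff_left _ _

lemma closedNhd_sdiff_of_mem (hv : v ∈ S) : closedNhd G v \ S = whiteNbrs G S v :=
  insert_sdiff_of_mem _ hv

lemma closedNhd_sdiff_of_notMem (hv : v ∉ S) :
    closedNhd G v \ S = insert v (whiteNbrs G S v) :=
  insert_sdiff_of_notMem _ hv

lemma self_notMem_whiteNbrs : v ∉ whiteNbrs G S v := by simp [mem_whiteNbrs]

lemma not_closedNhd_subset_of_notMem (hv : v ∉ S) : ¬ closedNhd G v ⊆ S :=
  fun h => hv (h (mem_insert_self _ _))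

lemma not_closedNhd_subset_of_whiteDeg_pos (hv : 0 < whiteDeg G S v) :
    ¬ closedNhd G v ⊆ S := by
  obtain ⟨z, hz⟩ := card_pos.1 hv
  obtain ⟨hvz, hzS⟩ := mem_whiteNbrs.1 hz
  exact fun h => hzS (h (mem_closedNhd.2 (.inr hvz)))

lemma whiteDeg_pos_of_mem_of_not_closedNhd_subset (hv : v ∈ S) (h : ¬ closedNhd G v ⊆ S) :
    0 < whiteDeg G S v := by
  rw [← sdiff_nonempty, closedNhd_sdiff_of_mem hv] at h
  exact card_pos.2 h

lemma card_closedNhd_sdiff_of_notMem (hv : v ∉ S) :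
    #(closedNhd G v \ S) = whiteDeg G S v + 1 := by
  rw [closedNhd_sdiff_of_notMem hv, card_insert_of_notMem self_notMem_whiteNbrs, whiteDeg]

lemma whiteDeg_le_card_closedNhd_sdiff : whiteDeg G S v ≤ #(closedNhd G v \ S) :=
  card_le_card (sdiff_subset_sdiff (subset_insert _ _) Subset.rfl)

lemma whiteDeg_pos (h : G.Adj v u) (hu : u ∉ S) : 0 < whiteDeg G S v :=
  card_pos.2 ⟨u, mem_whiteNbrs.2 ⟨h, hu⟩⟩

lemma blueDeg_pos (h : G.Adj v u) (hu : u ∈ S) : 0 < blueDeg G S v :=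
  card_pos.2 ⟨u, mem_blueNbrs.2 ⟨h, hu⟩⟩

lemma two_le_blueDeg (hx : G.Adj v x) (hxS : x ∈ S) (hu : G.Adj v u) (huS : u ∈ S)
    (hxu : x ≠ u) : 2 ≤ blueDeg G S v :=
  one_lt_card.2 ⟨x, mem_blueNbrs.2 ⟨hx, hxS⟩, u, mem_blueNbrs.2 ⟨hu, huS⟩, hxu⟩

lemma whiteDeg_add_blueDeg : whiteDeg G S v + blueDeg G S v = G.degree v :=
  card_sdiff_add_card_inter _ _

lemma whiteNbrs_anti (h : S ⊆ T) : whiteNbrs G T v ⊆ whiteNbrs G S v :=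
  sdiff_subset_sdiff Subset.rfl h

lemma whiteDeg_anti (h : S ⊆ T) : whiteDeg G T v ≤ whiteDeg G S v :=
  card_le_card (whiteNbrs_anti h)

lemma whiteDeg_play_le (G : SimpleGraph α) (S : Finset α) (v x : α) :
    whiteDeg G (play G S v) x ≤ whiteDeg G S x :=
  whiteDeg_anti (subset_play G S v)

lemma whiteDeg_eq_add (h : S ⊆ T) (v : α) :
    whiteDeg G S v = whiteDeg G T v + #(G.neighborFinset v ∩ (T \ S)) := by
  have hsplit : whiteNbrs G S v = whiteNbrs G T v ∪ G.neighborFinset v ∩ (T \ S) := by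
    ext u
    have := @h u
    simp only [mem_union, mem_whiteNbrs, mem_inter, mem_sdiff, G.mem_neighborFinset]
    tauto
  rw [whiteDeg, hsplit, card_union_of_disjoint, whiteDeg]
  exact disjoint_left.2 fun u hu hu' =>
    (mem_whiteNbrs.1 hu).2 (mem_sdiff.1 (mem_inter.1 hu').2).1

lemma whiteDeg_play_add_card_le {A : Finset α} (hA : A ⊆ closedNhd G v \ S)
    (hx : ∀ u ∈ A, G.Adj x u) : whiteDeg G (play G S v) x + #A ≤ whiteDeg G S x := by
  have hsplit := whiteDeg_eq_add (G := G) (subset_play G S v) x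
  rw [play_sdiff] at hsplit
  have := card_le_card (subset_inter (fun u hu => (G.mem_neighborFinset x u).2 (hx u hu)) hA)
  omega

lemma whiteDeg_play_self : whiteDeg G (play G S v) v = 0 :=
  card_eq_zero.2 <| sdiff_eq_empty_iff_subset.2 <|
    (subset_insert v (G.neighborFinset v)).trans subset_union_right

lemma whiteDeg_play_lt (hz : z ∈ closedNhd G v \ S) (hxz : G.Adj x z) :
    whiteDeg G (play G S v) x < whiteDeg G S x := by
  simpa using whiteDeg_play_add_card_le (singleton_subset_iff.2 hz) (by simpa using hxz)

lemma whiteDeg_play_lt_of_mem_whiteNbrs (hv : v ∉ S) (hx : x ∈ whiteNbrs G S v) :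
    whiteDeg G (play G S v) x < whiteDeg G S x :=
  whiteDeg_play_lt (mem_sdiff.2 ⟨mem_insert_self _ _, hv⟩) (mem_whiteNbrs.1 hx).1.symm

lemma whiteDeg_play_add_two_le (hv : v ∉ S) (hu : u ∈ whiteNbrs G S v) (hvx : G.Adj x v)
    (hux : G.Adj x u) : whiteDeg G (play G S v) x + 2 ≤ whiteDeg G S x := by
  obtain ⟨hvu, huS⟩ := mem_whiteNbrs.1 hu
  rw [← card_pair hvu.ne]
  apply whiteDeg_play_add_card_le
  · simp [insert_subset_iff, mem_closedNhd, hv, hvu, huS]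
  · simp [hvx, hux]

/-- Every white vertex has at most `k` white neighbors. -/
def WhiteDegLE (G : SimpleGraph α) (S : Finset α) (k : ℕ) : Prop :=
  ∀ v ∉ S, whiteDeg G S v ≤ k

lemma WhiteDegLE.mono {k : ℕ} (hS : WhiteDegLE G S k) (h : S ⊆ T) : WhiteDegLE G T k :=
  fun v hv => (whiteDeg_anti h).trans (hS v fun hvS => hv (h hvS))

lemma sum_card_neighborFinset_inter_comm (A B : Finset α) :
    ∑ v ∈ A, #(G.neighborFinset v ∩ B) = ∑ z ∈ B, #(G.neighborFinset z ∩ A) := by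
  convert sum_card_bipartiteAbove_eq_sum_card_bipartiteBelow G.Adj (s := A) (t := B) using 3
  · ext; simp [bipartiteAbove, and_comm]
  · ext; simp [bipartiteBelow, and_comm, G.adj_comm]

end Neighborhoods

section Potentials

variable {α : Type*} [Fintype α] {G : SimpleGraph α} {S T : Finset α} {t v x y z : α} {m : ℤ}

/-- The weight of `v` in the position with dominated set `S`: a white vertex counts `15`, a blue
vertex with `k` white neighbors counts `β k`. -/
noncomputable def vertexWeight (β : ℕ → ℤ) (G : SimpleGraph α) (S : Finset α) (v : α) : ℤ :=
  if v ∈ S then β (whiteDeg G S v) else 15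

lemma vertexWeight_of_mem {β : ℕ → ℤ} (hv : v ∈ S) :
    vertexWeight β G S v = β (whiteDeg G S v) :=
  if_pos hv

lemma vertexWeight_of_notMem {β : ℕ → ℤ} (hv : v ∉ S) : vertexWeight β G S v = 15 :=
  if_neg hv

/-- The potential of the position with dominated set `S`, the sum of the weights of its vertices. -/
noncomputable def potential (β : ℕ → ℤ) (G : SimpleGraph α) (S : Finset α) : ℤ :=
  ∑ v, vertexWeight β G S v

/-- The weight of a blue vertex with `k` white neighbors used while some move dominates at least
five new vertices. -/
def coarseWeight (k : ℕ) : ℤ := if k = 0 then 0 else 9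

/-- The weight of a blue vertex with `k` white neighbors used once every move dominates at most
four new vertices. -/
def fineWeight (k : ℕ) : ℤ := if k = 0 then 0 else 5 + k

lemma potential_nonneg {β : ℕ → ℤ} (hβ : ∀ k, 0 ≤ β k) (G : SimpleGraph α) (S : Finset α) :
    0 ≤ potential β G S :=
  sum_nonneg fun v _ => by unfold vertexWeight; split_ifs; exacts [hβ _, by norm_num]

lemma coarseWeight_nonneg (k : ℕ) : 0 ≤ coarseWeight k := by
  unfold coarseWeight; split_ifs <;> norm_num

lemma fineWeight_nonneg (k : ℕ) : 0 ≤ fineWeight k := by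
  unfold fineWeight; split_ifs <;> positivity

lemma fineWeight_le (k : ℕ) : fineWeight k ≤ 5 + k := by
  unfold fineWeight; split_ifs <;> omega

lemma potential_eq_sum_add (β : ℕ → ℤ) (G : SimpleGraph α) (S : Finset α) :
    potential β G S = ∑ v ∈ S, β (whiteDeg G S v) + 15 * #Sᶜ := by
  rw [potential, ← sum_add_sum_compl S]
  congr 1
  · exact sum_congr rfl fun v => vertexWeight_of_mem
  · simp only [sum_congr rfl fun v (hv : v ∈ Sᶜ) => vertexWeight_of_notMem (mem_compl.1 hv),
      sum_const, nsmul_eq_mul, mul_comm]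

/-- The contribution of a vertex `z` that becomes dominated to the decrease of the fine potential,
as the dominated set grows from `S` to `T`: the vertex trades weight `15` for its weight as a blue
vertex, and each of its blue neighbors loses one white neighbor. -/
noncomputable def gain (G : SimpleGraph α) (S T : Finset α) (z : α) : ℤ :=
  15 + blueDeg G S z - fineWeight (whiteDeg G T z)

/-- The blue vertices that lose their last white neighbor as the dominated set grows from `S` to
`T`. -/
noncomputable def exhausted (G : SimpleGraph α) (S T : Finset α) : Finset α :=
  {y ∈ S | whiteDeg G S y ≠ 0 ∧ whiteDeg G T y = 0}

lemma mem_exhausted :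
    y ∈ exhausted G S T ↔ y ∈ S ∧ whiteDeg G S y ≠ 0 ∧ whiteDeg G T y = 0 := by
  simp [exhausted]

lemma le_gain (G : SimpleGraph α) (S T : Finset α) (z : α) :
    10 + (blueDeg G S z : ℤ) - whiteDeg G T z ≤ gain G S T z := by
  unfold gain; linarith [fineWeight_le (whiteDeg G T z)]

lemma gain_of_whiteDeg_eq_zero (h : whiteDeg G T z = 0) :
    gain G S T z = 15 + blueDeg G S z := by
  simp [gain, h, fineWeight]

lemma fineWeight_whiteDeg (h : S ⊆ T) (y : α) :
    fineWeight (whiteDeg G S y) = fineWeight (whiteDeg G T y) +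
      #(G.neighborFinset y ∩ (T \ S)) +
      5 * (if whiteDeg G S y ≠ 0 ∧ whiteDeg G T y = 0 then 1 else 0 : ℤ) := by
  have := whiteDeg_eq_add (G := G) h y
  unfold fineWeight
  split_ifs <;> omega

lemma potential_fineWeight_eq (h : S ⊆ T) :
    potential fineWeight G S = potential fineWeight G T + ∑ z ∈ T \ S, gain G S T z +
      5 * #(exhausted G S T) := by
  have hcompl : #Sᶜ = #Tᶜ + #(T \ S) := by
    have := card_add_card_compl S
    have := card_add_card_compl T
    have := card_sdiff_add_card_eq_card h
    omega
  have hblue : ∑ y ∈ S, fineWeight (whiteDeg G S y) = ∑ y ∈ S, fineWeight (whiteDeg G T y) +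
      ∑ z ∈ T \ S, (blueDeg G S z : ℤ) + 5 * #(exhausted G S T) := by
    have hcount : ∑ y ∈ S, (#(G.neighborFinset y ∩ (T \ S)) : ℤ) =
        ∑ z ∈ T \ S, (blueDeg G S z : ℤ) :=
      mod_cast sum_card_neighborFinset_inter_comm S (T \ S)
    rw [sum_congr rfl fun y _ => fineWeight_whiteDeg h y, sum_add_distrib, sum_add_distrib,
      ← mul_sum, hcount, sum_boole, exhausted]
  have hgain : ∑ z ∈ T \ S, gain G S T z = 15 * #(T \ S) + ∑ z ∈ T \ S, (blueDeg G S z : ℤ) -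
      ∑ z ∈ T \ S, fineWeight (whiteDeg G T z) := by
    simp only [gain, sum_sub_distrib, sum_add_distrib, sum_const, nsmul_eq_mul, mul_comm]
  rw [potential_eq_sum_add, potential_eq_sum_add, hblue, hcompl, hgain, ← sum_sdiff h]
  push_cast
  ring

lemma potential_play_of_mem (ht : t ∈ S) :
    potential fineWeight G S = potential fineWeight G (play G S t) +
      ∑ x ∈ whiteNbrs G S t, gain G S (play G S t) x + 5 * #(exhausted G S (play G S t)) := by
  rw [potential_fineWeight_eq (subset_play G S t), play_sdiff, closedNhd_sdiff_of_mem ht]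

lemma potential_play_of_notMem (ht : t ∉ S) :
    potential fineWeight G S = potential fineWeight G (play G S t) + (15 + blueDeg G S t) +
      ∑ x ∈ whiteNbrs G S t, gain G S (play G S t) x + 5 * #(exhausted G S (play G S t)) := by
  rw [potential_fineWeight_eq (subset_play G S t), play_sdiff, closedNhd_sdiff_of_notMem ht,
    sum_insert self_notMem_whiteNbrs, gain_of_whiteDeg_eq_zero whiteDeg_play_self]
  ring

lemma mul_whiteDeg_le_sum_gain (hm : ∀ x ∈ whiteNbrs G S t, m ≤ gain G S T x) :
    m * whiteDeg G S t ≤ ∑ x ∈ whiteNbrs G S t, gain G S T x := by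
  simpa [whiteDeg, mul_comm] using card_nsmul_le_sum _ _ m hm

lemma potential_play_le_of_mem (ht : t ∈ S)
    (hm : ∀ x ∈ whiteNbrs G S t, m ≤ gain G S (play G S t) x) :
    potential fineWeight G (play G S t) + m * whiteDeg G S t +
      5 * #(exhausted G S (play G S t)) ≤ potential fineWeight G S := by
  linarith [potential_play_of_mem (G := G) ht, mul_whiteDeg_le_sum_gain hm]

lemma potential_play_le_of_notMem (ht : t ∉ S)
    (hm : ∀ x ∈ whiteNbrs G S t, m ≤ gain G S (play G S t) x) :
    potential fineWeight G (play G S t) + (15 + blueDeg G S t) + m * whiteDeg G S t +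
      5 * #(exhausted G S (play G S t)) ≤ potential fineWeight G S := by
  linarith [potential_play_of_notMem (G := G) ht, mul_whiteDeg_le_sum_gain hm]

lemma card_exhausted_play_pos (ht : t ∈ S) (hpos : 0 < whiteDeg G S t) :
    0 < #(exhausted G S (play G S t)) :=
  card_pos.2 ⟨t, mem_exhausted.2 ⟨ht, hpos.ne', whiteDeg_play_self⟩⟩

end Potentials

section Staller

variable {α : Type*} {G : SimpleGraph α} {S T : Finset α} {u x z : α}

/-- Every edge joining two white vertices lies in a triangle whose third vertex is blue. -/
def WhiteEdgesHaveBlueApex (G : SimpleGraph α) (S : Finset α) : Prop :=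
  ∀ ⦃a⦄, a ∉ S → ∀ ⦃b⦄, b ∉ S → G.Adj a b → ∃ r ∈ S, G.Adj a r ∧ G.Adj b r

lemma WhiteEdgesHaveBlueApex.mono (hS : WhiteEdgesHaveBlueApex G S) (h : S ⊆ T) :
    WhiteEdgesHaveBlueApex G T := by
  intro a ha b hb hab
  obtain ⟨r, hr, har, hbr⟩ := hS (fun haS => ha (h haS)) (fun hbS => hb (h hbS)) hab
  exact ⟨r, h hr, har, hbr⟩

variable [Fintype α]

/-- `u` is a blue vertex whose only white neighbor is `z`. -/
def IsPendantAt (G : SimpleGraph α) (S : Finset α) (u z : α) : Prop :=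
  u ∈ S ∧ whiteNbrs G S u = {z}

protected lemma IsPendantAt.mem_whiteNbrs (h : IsPendantAt G S u z) : z ∈ whiteNbrs G S u :=
  h.2 ▸ mem_singleton_self z

lemma IsPendantAt.adj (h : IsPendantAt G S u z) : G.Adj u z :=
  (mem_whiteNbrs.1 h.mem_whiteNbrs).1

lemma IsPendantAt.notMem (h : IsPendantAt G S u z) : z ∉ S :=
  (mem_whiteNbrs.1 h.mem_whiteNbrs).2

lemma IsPendantAt.whiteDeg_eq_one (h : IsPendantAt G S u z) : whiteDeg G S u = 1 := by
  rw [whiteDeg, h.2, card_singleton]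

protected lemma IsPendantAt.blueDeg_pos (h : IsPendantAt G S u z) : 0 < blueDeg G S z :=
  blueDeg_pos h.adj.symm h.1

-- The apex sees both ends of the white edge, so it is not pendant.
protected lemma IsPendantAt.two_le_blueDeg (h : IsPendantAt G S u z)
    (hap : WhiteEdgesHaveBlueApex G S) (hz : 0 < whiteDeg G S z) : 2 ≤ blueDeg G S z := by
  obtain ⟨s, hs⟩ := card_pos.1 hz
  obtain ⟨hzs, hsS⟩ := mem_whiteNbrs.1 hs
  obtain ⟨r, hr, hzr, hsr⟩ := hap h.notMem hsS hzs
  refine two_le_blueDeg h.adj.symm h.1 hzr hr ?_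
  rintro rfl
  have hsz : s ∈ ({z} : Finset α) := h.2 ▸ mem_whiteNbrs.2 ⟨hsr.symm, hsS⟩
  exact hzs.ne' (mem_singleton.1 hsz)

lemma eight_le_gain_of_mem (hS : WhiteDegLE G S 3) (hu : u ∈ S) (hx : x ∈ whiteNbrs G S u) :
    8 ≤ gain G S (play G S u) x := by
  obtain ⟨hux, hxS⟩ := mem_whiteNbrs.1 hx
  have := le_gain G S (play G S u) x
  have := whiteDeg_play_le G S u x
  have := hS x hxS
  have := blueDeg_pos hux.symm hu
  omega

lemma eight_le_gain_of_notMem (hS : WhiteDegLE G S 3) (hu : u ∉ S)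
    (hx : x ∈ whiteNbrs G S u) : 8 ≤ gain G S (play G S u) x := by
  have := le_gain G S (play G S u) x
  have := whiteDeg_play_lt_of_mem_whiteNbrs hu hx
  have := hS x (mem_whiteNbrs.1 hx).2
  omega

lemma potential_play_pendant_le (h : IsPendantAt G S u z) :
    potential fineWeight G (play G S u) + 15 + blueDeg G S z ≤
      potential fineWeight G S + whiteDeg G S z := by
  have hdrop := potential_play_of_mem (G := G) h.1
  rw [h.2, sum_singleton] at hdrop
  have := card_exhausted_play_pos h.1 (h.whiteDeg_eq_one ▸ Nat.one_pos)
  have := le_gain G S (play G S u) z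
  have := whiteDeg_play_le G S u z
  omega

lemma potential_play_add_le_or_exists (hS : WhiteDegLE G S 3) (hu : ¬ closedNhd G u ⊆ S) :
    potential fineWeight G (play G S u) + 21 ≤ potential fineWeight G S ∨
      ∃ z ∉ S, (whiteDeg G S z = 0 ∨ IsPendantAt G S u z) ∧
        potential fineWeight G (play G S u) + 15 + blueDeg G S z ≤
          potential fineWeight G S + whiteDeg G S z := by
  by_cases huS : u ∈ S
  · have hpos := whiteDeg_pos_of_mem_of_not_closedNhd_subset huS hu
    obtain hone | htwo : whiteDeg G S u = 1 ∨ 2 ≤ whiteDeg G S u := by omega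
    · obtain ⟨z, hz⟩ := card_eq_one.1 hone
      have hpend : IsPendantAt G S u z := ⟨huS, hz⟩
      exact .inr ⟨z, hpend.notMem, .inr hpend, potential_play_pendant_le hpend⟩
    · left
      have := potential_play_le_of_mem huS fun x => eight_le_gain_of_mem hS huS
      have := card_exhausted_play_pos huS hpos
      omega
  · have := potential_play_le_of_notMem huS fun x => eight_le_gain_of_notMem hS huS
    obtain hzero | hpos := (whiteDeg G S u).eq_zero_or_pos
    · exact .inr ⟨u, huS, .inl hzero, by omega⟩
    · left; omega

lemma potential_play_add_thirteen_le (hS : WhiteDegLE G S 3) (hu : ¬ closedNhd G u ⊆ S) :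
    potential fineWeight G (play G S u) + 13 ≤ potential fineWeight G S := by
  obtain h | ⟨z, hz, hzero | hpend, h⟩ := potential_play_add_le_or_exists hS hu
  · omega
  · omega
  · have := hS z hz
    have := hpend.blueDeg_pos
    omega

lemma potential_play_add_seventeen_le_or_exists (hδ : ∀ v, 2 ≤ G.degree v)
    (hS : WhiteDegLE G S 3) (hap : WhiteEdgesHaveBlueApex G S) (hu : ¬ closedNhd G u ⊆ S) :
    potential fineWeight G (play G S u) + 17 ≤ potential fineWeight G S ∨
      ∃ z, IsPendantAt G S u z ∧ 0 < whiteDeg G S z ∧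
        potential fineWeight G (play G S u) + 17 ≤
          potential fineWeight G S + whiteDeg G S z := by
  obtain h | ⟨z, -, hzpend, h⟩ := potential_play_add_le_or_exists hS hu
  · left; omega
  · have := hδ z
    have := whiteDeg_add_blueDeg (G := G) (S := S) (v := z)
    obtain hzero | hpos := (whiteDeg G S z).eq_zero_or_pos
    · left; omega
    · have hpend := hzpend.resolve_left hpos.ne'
      have := hpend.two_le_blueDeg hap hpos
      exact .inr ⟨z, hpend, hpos, by omega⟩

lemma potential_play_add_le_of_whiteDegLE {k : ℕ} (hδ : ∀ v, 2 ≤ G.degree v)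
    (hS : WhiteDegLE G S k) (hk : k ≤ 3) (hap : WhiteEdgesHaveBlueApex G S)
    (hu : ¬ closedNhd G u ⊆ S) :
    potential fineWeight G (play G S u) + 17 ≤ potential fineWeight G S + k := by
  obtain h | ⟨z, hpend, -, h⟩ :=
    potential_play_add_seventeen_le_or_exists hδ (fun v hv => (hS v hv).trans hk) hap hu
  · omega
  · have := hS z hpend.notMem
    omega

end Staller

section Dominator

variable {α : Type*} [Fintype α] {G : SimpleGraph α} {S T : Finset α} {a b c t u v x y z : α}

/-- Dominator has a legal move `v` that lowers the potential `Φ` by at least `c`, and by at least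
`2 * c` together with any legal reply. -/
def ForcesDrop (G : SimpleGraph α) (Φ : Finset α → ℤ) (c : ℤ) (S : Finset α) : Prop :=
  ∃ v, ¬ closedNhd G v ⊆ S ∧ Φ (play G S v) + c ≤ Φ S ∧
    ∀ u, ¬ closedNhd G u ⊆ play G S v → Φ (play G (play G S v) u) + 2 * c ≤ Φ S

lemma ForcesDrop.of_add {Φ : Finset α → ℤ} {c : ℤ} (d e : ℤ) (hv : ¬ closedNhd G v ⊆ S)
    (hd : c ≤ d) (hde : 2 * c ≤ d + e) (hmove : Φ (play G S v) + d ≤ Φ S)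
    (hreply : ∀ u, ¬ closedNhd G u ⊆ play G S v →
      Φ (play G (play G S v) u) + e ≤ Φ (play G S v)) : ForcesDrop G Φ c S :=
  ⟨v, hv, by linarith, fun u hu => by linarith [hreply u hu]⟩

/-- Every edge of the graph lies in a triangle. -/
def EveryEdgeInTriangle (G : SimpleGraph α) : Prop :=
  ∀ ⦃u v⦄, G.Adj u v → ∃ w, G.Adj u w ∧ G.Adj v w

lemma EveryEdgeInTriangle.two_le_degree (htri : EveryEdgeInTriangle G) (huv : G.Adj v u) :
    2 ≤ G.degree v := by
  obtain ⟨w, hvw, huw⟩ := htri huv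
  exact one_lt_card.2 ⟨u, by simpa using huv, w, by simpa using hvw, huw.ne⟩

-- The third vertex of a triangle on `t` and `x` is white, and then `x` loses two white neighbors,
-- or it is blue and raises the gain of `x`.
lemma nine_le_gain_of_notMem (htri : EveryEdgeInTriangle G) (hS : WhiteDegLE G S 3) (ht : t ∉ S)
    (hx : x ∈ whiteNbrs G S t) : 9 ≤ gain G S (play G S t) x := by
  obtain ⟨htx, hxS⟩ := mem_whiteNbrs.1 hx
  obtain ⟨r, htr, hxr⟩ := htri htx
  have := le_gain G S (play G S t) x
  have := hS x hxS
  by_cases hr : r ∈ S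
  · have := blueDeg_pos hxr hr
    have := whiteDeg_play_lt_of_mem_whiteNbrs ht hx
    omega
  · have := whiteDeg_play_add_two_le ht (mem_whiteNbrs.2 ⟨htr, hr⟩) htx.symm hxr
    omega

lemma forcesDrop_of_whiteDeg_eq_three (htri : EveryEdgeInTriangle G) (hS : WhiteDegLE G S 3)
    (ht : t ∉ S) (hdeg : whiteDeg G S t = 3) :
    ForcesDrop G (potential fineWeight G) 27 S := by
  refine .of_add 42 13 (not_closedNhd_subset_of_notMem ht) (by norm_num) (by norm_num) ?_
    fun u hu => potential_play_add_thirteen_le (hS.mono (subset_play ..)) hu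
  have := potential_play_le_of_notMem ht fun x => nine_le_gain_of_notMem htri hS ht
  omega

lemma forcesDrop_of_white_triangle (hS : WhiteDegLE G S 2) (ha : a ∉ S) (hb : b ∈ whiteNbrs G S a)
    (hc : c ∈ whiteNbrs G S a) (hbc : G.Adj b c) :
    ForcesDrop G (potential fineWeight G) 27 S := by
  have hS3 : WhiteDegLE G S 3 := fun v hv => (hS v hv).trans (by norm_num)
  have hnbrs : whiteNbrs G S a = {b, c} := by
    symm
    apply eq_of_subset_of_card_le
    · simp [insert_subset_iff, hb, hc]
    · rw [card_pair hbc.ne]; exact hS a ha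
  have hgain {x y : α} (hx : x ∈ whiteNbrs G S a) (hy : y ∈ whiteNbrs G S a) (hxy : G.Adj x y) :
      15 ≤ gain G S (play G S a) x := by
    obtain ⟨hax, hxS⟩ := mem_whiteNbrs.1 hx
    have := whiteDeg_play_add_two_le ha hy hax.symm hxy
    have := hS x hxS
    rw [gain_of_whiteDeg_eq_zero (by omega)]
    omega
  refine .of_add 45 13 (not_closedNhd_subset_of_notMem ha) (by norm_num) (by norm_num) ?_
    fun u hu => potential_play_add_thirteen_le (hS3.mono (subset_play ..)) hu
  have hdrop := potential_play_of_notMem (G := G) ha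
  rw [hnbrs, sum_pair hbc.ne] at hdrop
  linarith [hgain hb hc hbc, hgain hc hb hbc.symm]

section WhitePaths

lemma forcesDrop_of_add_thirty_nine_le (hδ : ∀ v, 2 ≤ G.degree v) (hS : WhiteDegLE G S 2)
    (hap : WhiteEdgesHaveBlueApex G S) (hv : ¬ closedNhd G v ⊆ S)
    (hdrop : potential fineWeight G (play G S v) + 39 ≤ potential fineWeight G S) :
    ForcesDrop G (potential fineWeight G) 27 S := by
  refine .of_add 39 15 hv (by norm_num) (by norm_num) hdrop fun u hu => ?_
  have := potential_play_add_le_of_whiteDegLE hδ (hS.mono (subset_play ..)) (by norm_num)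
    (hap.mono (subset_play ..)) hu
  omega

lemma potential_play_add_forty_one_le_of_four_le_whiteDeg (hS : WhiteDegLE G S 2) (hx : x ∈ S)
    (hdeg : 4 ≤ whiteDeg G S x) :
    potential fineWeight G (play G S x) + 41 ≤ potential fineWeight G S := by
  have hgain : ∀ z ∈ whiteNbrs G S x, 9 ≤ gain G S (play G S x) z := by
    intro z hz
    obtain ⟨hxz, hzS⟩ := mem_whiteNbrs.1 hz
    have := le_gain G S (play G S x) z
    have := whiteDeg_play_le G S x z
    have := hS z hzS
    have := blueDeg_pos hxz.symm hx
    omega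
  have := potential_play_le_of_mem hx hgain
  have := card_exhausted_play_pos (G := G) hx (by omega)
  omega

lemma potential_play_add_forty_one_le_of_white_path (hS : WhiteDegLE G S 2) (hc : c ∉ S)
    (ha : a ∈ whiteNbrs G S c) (hb : b ∈ whiteNbrs G S c) (hab : a ≠ b) (hx : x ∈ S)
    (hdeg : whiteDeg G S x ≤ 3) (hxa : G.Adj x a) (hxb : G.Adj x b) (hxc : G.Adj x c) :
    potential fineWeight G (play G S c) + 41 ≤ potential fineWeight G S := by
  obtain ⟨hca, haS⟩ := mem_whiteNbrs.1 ha
  obtain ⟨hcb, hbS⟩ := mem_whiteNbrs.1 hb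
  have hnbrs : whiteNbrs G S c = {a, b} := by
    symm
    apply eq_of_subset_of_card_le
    · simp [insert_subset_iff, ha, hb]
    · rw [card_pair hab]; exact hS c hc
  have hgain {y : α} (hy : y ∈ whiteNbrs G S c) (hxy : G.Adj x y) :
      10 ≤ gain G S (play G S c) y := by
    have := le_gain G S (play G S c) y
    have := whiteDeg_play_lt_of_mem_whiteNbrs hc hy
    have := hS y (mem_whiteNbrs.1 hy).2
    have := blueDeg_pos hxy.symm hx
    omega
  have hexh : 0 < #(exhausted G S (play G S c)) := by
    have hthree := whiteDeg_play_add_card_le (G := G) (S := S) (v := c) (x := x) (A := {c, a, b})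
      (by simp [insert_subset_iff, mem_closedNhd, *]) (by simp [*])
    rw [card_eq_three.2 ⟨c, a, b, hca.ne, hcb.ne, hab, rfl⟩] at hthree
    exact card_pos.2 ⟨x, mem_exhausted.2 ⟨hx, by omega, by omega⟩⟩
  have hdrop := potential_play_of_notMem (G := G) hc
  rw [hnbrs, sum_pair hab] at hdrop
  have := hgain ha hxa
  have := hgain hb hxb
  have := blueDeg_pos hxc.symm hx
  omega

lemma whiteDeg_le_blueDeg (hap : WhiteEdgesHaveBlueApex G S)
    (hno : ∀ c ∉ S, ∀ x ∈ S, G.Adj c x → ∀ a ∈ whiteNbrs G S c, ∀ b ∈ whiteNbrs G S c,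
      G.Adj a x → G.Adj b x → a = b) (hc : c ∉ S) : whiteDeg G S c ≤ blueDeg G S c := by
  have hapex : ∀ a ∈ whiteNbrs G S c, ∃ r ∈ S, G.Adj c r ∧ G.Adj a r := fun a ha =>
    hap hc (mem_whiteNbrs.1 ha).2 (mem_whiteNbrs.1 ha).1
  choose! apex hapexS hcapex hadj using hapex
  refine card_le_card_of_injOn apex
    (fun a ha => mem_blueNbrs.2 ⟨hcapex a ha, hapexS a ha⟩) fun a ha b hb heq => ?_
  exact hno c hc _ (hapexS a ha) (hcapex a ha) a ha b hb (hadj a ha) (heq ▸ hadj b hb)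

lemma forcesDrop_of_whiteDeg_eq_two (hδ : ∀ v, 2 ≤ G.degree v) (hS : WhiteDegLE G S 2)
    (hap : WhiteEdgesHaveBlueApex G S) (ht : t ∉ S) (hdeg : whiteDeg G S t = 2) :
    ForcesDrop G (potential fineWeight G) 27 S := by
  by_cases hpath : ∃ c ∉ S, ∃ x ∈ S, G.Adj c x ∧ ∃ a ∈ whiteNbrs G S c, ∃ b ∈ whiteNbrs G S c,
      G.Adj a x ∧ G.Adj b x ∧ a ≠ b
  · obtain ⟨c, hc, x, hx, hcx, a, ha, b, hb, hax, hbx, hab⟩ := hpath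
    obtain hfour | hthree : 4 ≤ whiteDeg G S x ∨ whiteDeg G S x ≤ 3 := by omega
    · have := potential_play_add_forty_one_le_of_four_le_whiteDeg hS hx hfour
      exact forcesDrop_of_add_thirty_nine_le hδ hS hap
        (not_closedNhd_subset_of_whiteDeg_pos (v := x) (by omega)) (by omega)
    · have := potential_play_add_forty_one_le_of_white_path hS hc ha hb hab hx hthree hax.symm
        hbx.symm hcx.symm
      exact forcesDrop_of_add_thirty_nine_le hδ hS hap (not_closedNhd_subset_of_notMem hc)
        (by omega)
  push Not at hpath
  have hle {c : α} (hc : c ∉ S) : whiteDeg G S c ≤ blueDeg G S c := whiteDeg_le_blueDeg hap hpath hc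
  have hgain : ∀ x ∈ whiteNbrs G S t, 11 ≤ gain G S (play G S t) x := by
    intro x hx
    have := le_gain G S (play G S t) x
    have := whiteDeg_play_lt_of_mem_whiteNbrs ht hx
    have := hle (mem_whiteNbrs.1 hx).2
    omega
  have := potential_play_le_of_notMem ht hgain
  have := hle ht
  exact forcesDrop_of_add_thirty_nine_le hδ hS hap (not_closedNhd_subset_of_notMem ht) (by omega)

end WhitePaths

section WhiteMatching

lemma whiteNbrs_eq_singleton (hS : WhiteDegLE G S 1) (hu : u ∉ S) (hv : v ∈ whiteNbrs G S u) :
    whiteNbrs G S u = {v} :=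
  (eq_of_subset_of_card_le (singleton_subset_iff.2 hv) (hS u hu)).symm

lemma mem_play_sdiff_of_white_edge (hS : WhiteDegLE G S 1) (hu : u ∉ S)
    (hv : v ∈ whiteNbrs G S u) : y ∈ play G S u \ S ↔ y = u ∨ y = v := by
  rw [play_sdiff, closedNhd_sdiff_of_notMem hu, whiteNbrs_eq_singleton hS hu hv, mem_insert,
    mem_singleton]

lemma whiteDeg_play_of_white_edge (hS : WhiteDegLE G S 1) (hu : u ∉ S)
    (hv : v ∈ whiteNbrs G S u) : whiteDeg G (play G S u) v = 0 := by
  have := whiteDeg_play_lt_of_mem_whiteNbrs hu hv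
  have := hS v (mem_whiteNbrs.1 hv).2
  omega

lemma potential_play_of_white_edge (hS : WhiteDegLE G S 1) (hu : u ∉ S)
    (hv : v ∈ whiteNbrs G S u) :
    potential fineWeight G S = potential fineWeight G (play G S u) + (15 + blueDeg G S u) +
      (15 + blueDeg G S v) + 5 * #(exhausted G S (play G S u)) := by
  rw [potential_play_of_notMem hu, whiteNbrs_eq_singleton hS hu hv, sum_singleton,
    gain_of_whiteDeg_eq_zero (whiteDeg_play_of_white_edge hS hu hv)]

lemma forcesDrop_of_add_thirty_eight_le (hδ : ∀ v, 2 ≤ G.degree v) (hS : WhiteDegLE G S 1)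
    (hap : WhiteEdgesHaveBlueApex G S) (hv : ¬ closedNhd G v ⊆ S)
    (hdrop : potential fineWeight G (play G S v) + 38 ≤ potential fineWeight G S) :
    ForcesDrop G (potential fineWeight G) 27 S := by
  refine .of_add 38 16 hv (by norm_num) (by norm_num) hdrop fun u hu => ?_
  have := potential_play_add_le_of_whiteDegLE hδ (hS.mono (subset_play ..)) (by norm_num)
    (hap.mono (subset_play ..)) hu
  omega

lemma forcesDrop_of_three_le_blueDeg_add (hδ : ∀ v, 2 ≤ G.degree v) (hS : WhiteDegLE G S 1)
    (hap : WhiteEdgesHaveBlueApex G S) (hu : u ∉ S) (hv : v ∈ whiteNbrs G S u)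
    (hblue : 3 ≤ blueDeg G S u + blueDeg G S v) (hexh : 0 < #(exhausted G S (play G S u))) :
    ForcesDrop G (potential fineWeight G) 27 S := by
  refine forcesDrop_of_add_thirty_eight_le hδ hS hap (not_closedNhd_subset_of_notMem hu) ?_
  have := potential_play_of_white_edge hS hu hv
  omega

lemma forcesDrop_of_isPendantAt (hδ : ∀ v, 2 ≤ G.degree v) (hS : WhiteDegLE G S 1)
    (hap : WhiteEdgesHaveBlueApex G S) (hx : IsPendantAt G S x t) (ht : 0 < whiteDeg G S t) :
    ForcesDrop G (potential fineWeight G) 27 S := by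
  obtain ⟨s, hs⟩ := card_pos.1 ht
  obtain ⟨hts, hsS⟩ := mem_whiteNbrs.1 hs
  obtain ⟨r, hr, -, hsr⟩ := hap hx.notMem hsS hts
  have := hx.two_le_blueDeg hap ht
  have := blueDeg_pos hsr hr
  have hexh : x ∈ exhausted G S (play G S t) := by
    have := whiteDeg_play_lt (mem_sdiff.2 ⟨mem_insert_self _ _, hx.notMem⟩) hx.adj
    have := hx.whiteDeg_eq_one
    exact mem_exhausted.2 ⟨hx.1, by omega, by omega⟩
  exact forcesDrop_of_three_le_blueDeg_add hδ hS hap hx.notMem hs (by omega)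
    (card_pos.2 ⟨x, hexh⟩)

lemma ten_le_gain_of_whiteDegLE_one (hS : WhiteDegLE G S 1) (hx : x ∈ S)
    (hu : u ∈ whiteNbrs G S x) : 10 ≤ gain G S (play G S x) u := by
  obtain ⟨hxu, huS⟩ := mem_whiteNbrs.1 hu
  have := le_gain G S (play G S x) u
  have := whiteDeg_play_le G S x u
  have := hS u huS
  have := blueDeg_pos hxu.symm hx
  omega

lemma fifteen_le_gain_of_adj (hS : WhiteDegLE G S 1) (hu : u ∈ whiteNbrs G S x)
    (hv : v ∈ whiteNbrs G S x) (huv : G.Adj u v) : 15 ≤ gain G S (play G S x) u := by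
  obtain ⟨hxv, hvS⟩ := mem_whiteNbrs.1 hv
  have := whiteDeg_play_lt (mem_sdiff.2 ⟨mem_closedNhd.2 (.inr hxv), hvS⟩) huv
  have := hS u (mem_whiteNbrs.1 hu).2
  rw [gain_of_whiteDeg_eq_zero (by omega)]
  omega

lemma potential_play_apex_add_thirty_eight_le (hS : WhiteDegLE G S 1) (hx : x ∈ S)
    (hu : u ∈ whiteNbrs G S x) (hv : v ∈ whiteNbrs G S x) (huv : G.Adj u v)
    (hdeg : 3 ≤ whiteDeg G S x) :
    potential fineWeight G (play G S x) + 38 ≤ potential fineWeight G S := by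
  have hpair : {u, v} ⊆ whiteNbrs G S x := by simp [insert_subset_iff, hu, hv]
  have hthird : 0 < #(whiteNbrs G S x \ {u, v}) := by
    have := card_sdiff_add_card_eq_card hpair
    rw [card_pair huv.ne] at this
    unfold whiteDeg at hdeg
    omega
  have hrest : 10 * (#(whiteNbrs G S x \ {u, v}) : ℤ) ≤
      ∑ y ∈ whiteNbrs G S x \ {u, v}, gain G S (play G S x) y := by
    simpa [mul_comm] using
      card_nsmul_le_sum _ _ 10 fun y hy => ten_le_gain_of_whiteDegLE_one hS hx (mem_sdiff.1 hy).1
  have hdrop := potential_play_of_mem (G := G) hx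
  rw [← sum_sdiff hpair, sum_pair huv.ne] at hdrop
  have := fifteen_le_gain_of_adj hS hu hv huv
  have := fifteen_le_gain_of_adj hS hv hu huv.symm
  have := card_exhausted_play_pos (G := G) hx (by omega)
  omega

lemma IsPendantAt.of_play_white_edge (hS : WhiteDegLE G S 1) (hu : u ∉ S)
    (hv : v ∈ whiteNbrs G S u) (hub : blueDeg G S u = 1) (hvb : blueDeg G S v = 1)
    (hx : x ∈ S) (hux : G.Adj u x) (hvx : G.Adj v x) (hxdeg : whiteDeg G (play G S u) x = 0)
    (hz : IsPendantAt G (play G S u) y z) : IsPendantAt G S y z := by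
  have hyx : y ≠ x := by
    rintro rfl
    have := hz.whiteDeg_eq_one
    omega
  have hyS : y ∈ S := by
    by_contra hyS
    have := hz.whiteDeg_eq_one
    obtain rfl | rfl := (mem_play_sdiff_of_white_edge hS hu hv).1 (mem_sdiff.2 ⟨hz.1, hyS⟩)
    · have := whiteDeg_play_self (G := G) (S := S) (v := y)
      omega
    · have := whiteDeg_play_of_white_edge hS hu hv
      omega
  refine ⟨hyS, (Subset.antisymm ?_ (whiteNbrs_anti (subset_play ..))).trans hz.2⟩
  intro w hw
  obtain ⟨hyw, hwS⟩ := mem_whiteNbrs.1 hw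
  refine mem_whiteNbrs.2 ⟨hyw, fun hwT => ?_⟩
  obtain rfl | rfl := (mem_play_sdiff_of_white_edge hS hu hv).1 (mem_sdiff.2 ⟨hwT, hwS⟩)
  · have := two_le_blueDeg hux hx hyw.symm hyS hyx.symm
    omega
  · have := two_le_blueDeg hvx hx hyw.symm hyS hyx.symm
    omega

-- A pendant vertex that would let Staller reply with a drop of less than `17` was pendant before
-- Dominator's move.
lemma forcesDrop_of_isolated_white_triangle (hδ : ∀ v, 2 ≤ G.degree v) (hS : WhiteDegLE G S 1)
    (hap : WhiteEdgesHaveBlueApex G S) (hno : ∀ y z, IsPendantAt G S y z → whiteDeg G S z = 0)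
    (hu : u ∉ S) (hv : v ∈ whiteNbrs G S u) (hub : blueDeg G S u = 1) (hvb : blueDeg G S v = 1)
    (hx : x ∈ S) (hux : G.Adj u x) (hvx : G.Adj v x) (hexh : x ∈ exhausted G S (play G S u)) :
    ForcesDrop G (potential fineWeight G) 27 S := by
  refine .of_add 37 17 (not_closedNhd_subset_of_notMem hu) (by norm_num) (by norm_num) ?_
    fun w hw => ?_
  · have := potential_play_of_white_edge hS hu hv
    have := card_pos.2 ⟨x, hexh⟩
    omega
  · have hS3 : WhiteDegLE G S 3 := fun t ht => (hS t ht).trans (by norm_num)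
    obtain h | ⟨z, hz, hpos, -⟩ := potential_play_add_seventeen_le_or_exists hδ
      (hS3.mono (subset_play ..)) (hap.mono (subset_play _ _ _)) hw
    · exact h
    · have := hno w z (hz.of_play_white_edge hS hu hv hub hvb hx hux hvx (mem_exhausted.1 hexh).2.2)
      have := whiteDeg_play_le G S u z
      omega

lemma forcesDrop_of_white_edge (hδ : ∀ v, 2 ≤ G.degree v) (hS : WhiteDegLE G S 1)
    (hap : WhiteEdgesHaveBlueApex G S) (hu : u ∉ S) (hv : v ∈ whiteNbrs G S u) :
    ForcesDrop G (potential fineWeight G) 27 S := by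
  by_cases hpend : ∃ y z, IsPendantAt G S y z ∧ 0 < whiteDeg G S z
  · obtain ⟨y, z, hyz, hz⟩ := hpend
    exact forcesDrop_of_isPendantAt hδ hS hap hyz hz
  obtain ⟨huv, hvS⟩ := mem_whiteNbrs.1 hv
  obtain ⟨x, hx, hux, hvx⟩ := hap hu hvS huv
  by_cases hdeg : 3 ≤ whiteDeg G S x
  · exact forcesDrop_of_add_thirty_eight_le hδ hS hap
      (not_closedNhd_subset_of_whiteDeg_pos (v := x) (by omega))
      (potential_play_apex_add_thirty_eight_le hS hx (mem_whiteNbrs.2 ⟨hux.symm, hu⟩)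
        (mem_whiteNbrs.2 ⟨hvx.symm, hvS⟩) huv hdeg)
  have hexh : x ∈ exhausted G S (play G S u) := by
    have := whiteDeg_play_add_two_le hu hv hux.symm hvx.symm
    exact mem_exhausted.2 ⟨hx, by omega, by omega⟩
  by_cases hblue : 3 ≤ blueDeg G S u + blueDeg G S v
  · exact forcesDrop_of_three_le_blueDeg_add hδ hS hap hu hv hblue (card_pos.2 ⟨x, hexh⟩)
  have := blueDeg_pos hux hx
  have := blueDeg_pos hvx hx
  refine forcesDrop_of_isolated_white_triangle hδ hS hap (fun y z hyz => ?_) hu hv (by omega)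
    (by omega) hx hux hvx hexh
  by_contra hz
  exact hpend ⟨y, z, hyz, Nat.pos_of_ne_zero hz⟩

end WhiteMatching

section WhiteIndependent

lemma WhiteDegLE.whiteEdgesHaveBlueApex (hS : WhiteDegLE G S 0) : WhiteEdgesHaveBlueApex G S :=
  fun a ha _ hb hab => absurd (hS a ha) (whiteDeg_pos hab hb).not_ge

lemma two_le_blueDeg_of_whiteDegLE_zero (hδ : ∀ v, 2 ≤ G.degree v) (hS : WhiteDegLE G S 0)
    (hz : z ∉ S) : 2 ≤ blueDeg G S z := by
  have := hδ z
  have := hS z hz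
  have := whiteDeg_add_blueDeg (G := G) (S := S) (v := z)
  omega

lemma seventeen_le_gain_of_whiteDegLE_zero (hδ : ∀ v, 2 ≤ G.degree v) (hS : WhiteDegLE G S 0)
    (h : S ⊆ T) (hz : z ∉ S) : 17 ≤ gain G S T z := by
  have := hS z hz
  have := whiteDeg_anti (G := G) h (v := z)
  have := two_le_blueDeg_of_whiteDegLE_zero hδ hS hz
  rw [gain_of_whiteDeg_eq_zero (by omega)]
  omega

lemma forcesDrop_of_two_le_whiteDeg (hδ : ∀ v, 2 ≤ G.degree v) (hS : WhiteDegLE G S 0)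
    (hx : x ∈ S) (hdeg : 2 ≤ whiteDeg G S x) : ForcesDrop G (potential fineWeight G) 27 S := by
  refine forcesDrop_of_add_thirty_nine_le hδ (fun v hv => (hS v hv).trans (by norm_num))
    hS.whiteEdgesHaveBlueApex (not_closedNhd_subset_of_whiteDeg_pos (v := x) (by omega)) ?_
  have := potential_play_le_of_mem hx fun z hz =>
    seventeen_le_gain_of_whiteDegLE_zero hδ hS (subset_play G S x) (mem_whiteNbrs.1 hz).2
  have := card_exhausted_play_pos (G := G) hx (by omega)
  omega

lemma potential_play_add_twenty_seven_le (hδ : ∀ v, 2 ≤ G.degree v) (hS : WhiteDegLE G S 0)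
    (hone : ∀ x ∈ S, whiteDeg G S x ≤ 1) (hu : ¬ closedNhd G u ⊆ S) :
    potential fineWeight G (play G S u) + 27 ≤ potential fineWeight G S := by
  obtain ⟨z, hz⟩ := sdiff_nonempty.2 hu
  have hzS := (mem_sdiff.1 hz).2
  have hgain : 17 ≤ ∑ y ∈ closedNhd G u \ S, gain G S (play G S u) y := by
    have hle {y : α} (hy : y ∈ closedNhd G u \ S) : 17 ≤ gain G S (play G S u) y :=
      seventeen_le_gain_of_whiteDegLE_zero hδ hS (subset_play ..) (mem_sdiff.1 hy).2
    exact (hle hz).trans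
      (single_le_sum (fun y hy => (by norm_num : (0 : ℤ) ≤ 17).trans (hle hy)) hz)
  have hexh : blueNbrs G S z ⊆ exhausted G S (play G S u) := by
    intro x hx
    obtain ⟨hzx, hxS⟩ := mem_blueNbrs.1 hx
    have := hone x hxS
    have := whiteDeg_play_lt hz hzx.symm
    exact mem_exhausted.2 ⟨hxS, by omega, by omega⟩
  have := card_le_card hexh
  have : 2 ≤ #(blueNbrs G S z) := two_le_blueDeg_of_whiteDegLE_zero hδ hS hzS
  rw [potential_fineWeight_eq (subset_play G S u), play_sdiff]
  omega

lemma forcesDrop_of_whiteDegLE_zero (hδ : ∀ v, 2 ≤ G.degree v) (hS : WhiteDegLE G S 0)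
    (hv : v ∉ S) : ForcesDrop G (potential fineWeight G) 27 S := by
  by_cases htwo : ∃ x ∈ S, 2 ≤ whiteDeg G S x
  · obtain ⟨x, hx, hdeg⟩ := htwo
    exact forcesDrop_of_two_le_whiteDeg hδ hS hx hdeg
  have hone : ∀ x ∈ S, whiteDeg G S x ≤ 1 := fun x hx => by
    by_contra hdeg
    exact htwo ⟨x, hx, by omega⟩
  have hv' := not_closedNhd_subset_of_notMem (G := G) hv
  refine .of_add 27 27 hv' le_rfl (by norm_num)
    (potential_play_add_twenty_seven_le hδ hS hone hv') fun u hu =>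
      potential_play_add_twenty_seven_le hδ (hS.mono (subset_play ..)) (fun x _ => ?_) hu
  have := whiteDeg_play_le G S v x
  by_cases hxS : x ∈ S
  · have := hone x hxS
    omega
  · have := hS x hxS
    omega

end WhiteIndependent

lemma WhiteDegLE.of_forall_ne {k : ℕ} (hS : WhiteDegLE G S (k + 1))
    (hne : ∀ v ∉ S, whiteDeg G S v ≠ k + 1) : WhiteDegLE G S k := fun v hv => by
  have := hS v hv
  have := hne v hv
  omega

lemma EveryEdgeInTriangle.whiteEdgesHaveBlueApex (htri : EveryEdgeInTriangle G)
    (hno : ∀ a ∉ S, ∀ b ∈ whiteNbrs G S a, ∀ c ∈ whiteNbrs G S a, ¬ G.Adj b c) :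
    WhiteEdgesHaveBlueApex G S := by
  intro a ha b hb hab
  obtain ⟨r, har, hbr⟩ := htri hab
  refine ⟨r, ?_, har, hbr⟩
  by_contra hr
  exact hno a ha b (mem_whiteNbrs.2 ⟨hab, hb⟩) r (mem_whiteNbrs.2 ⟨har, hr⟩) hbr

lemma forcesDrop_potential_fineWeight (htri : EveryEdgeInTriangle G) (hδ : ∀ v, 2 ≤ G.degree v)
    (hS : WhiteDegLE G S 3) (hne : S ≠ univ) : ForcesDrop G (potential fineWeight G) 27 S := by
  by_cases hthree : ∃ t ∉ S, whiteDeg G S t = 3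
  · obtain ⟨t, ht, hdeg⟩ := hthree
    exact forcesDrop_of_whiteDeg_eq_three htri hS ht hdeg
  replace hS : WhiteDegLE G S 2 := hS.of_forall_ne (by simpa using hthree)
  by_cases htriangle : ∃ a ∉ S, ∃ b ∈ whiteNbrs G S a, ∃ c ∈ whiteNbrs G S a, G.Adj b c
  · obtain ⟨a, ha, b, hb, c, hc, hbc⟩ := htriangle
    exact forcesDrop_of_white_triangle hS ha hb hc hbc
  have hap : WhiteEdgesHaveBlueApex G S := htri.whiteEdgesHaveBlueApex (by simpa using htriangle)
  by_cases htwo : ∃ t ∉ S, whiteDeg G S t = 2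
  · obtain ⟨t, ht, hdeg⟩ := htwo
    exact forcesDrop_of_whiteDeg_eq_two hδ hS hap ht hdeg
  replace hS : WhiteDegLE G S 1 := hS.of_forall_ne (by simpa using htwo)
  by_cases hedge : ∃ u ∉ S, whiteDeg G S u = 1
  · obtain ⟨u, hu, hdeg⟩ := hedge
    obtain ⟨v, hv⟩ := card_pos.1 (hdeg ▸ Nat.one_pos : 0 < whiteDeg G S u)
    exact forcesDrop_of_white_edge hδ hS hap hu hv
  obtain ⟨v, hv⟩ := not_forall.1 (mt eq_univ_iff_forall.2 hne)
  exact forcesDrop_of_whiteDegLE_zero hδ (hS.of_forall_ne (by simpa using hedge)) hv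

end Dominator

section Coarse

variable {α : Type*} [Fintype α] {G : SimpleGraph α} {S T : Finset α} {u v : α}

/-- Every move dominates at most four new vertices. -/
def IsSparse (G : SimpleGraph α) (S : Finset α) : Prop :=
  ∀ v, #(closedNhd G v \ S) ≤ 4

lemma IsSparse.mono (hS : IsSparse G S) (h : S ⊆ T) : IsSparse G T := fun v =>
  (card_le_card (sdiff_subset_sdiff Subset.rfl h)).trans (hS v)

lemma IsSparse.whiteDegLE (hS : IsSparse G S) : WhiteDegLE G S 3 := fun v hv => by
  have := hS v
  rw [card_closedNhd_sdiff_of_notMem hv] at this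
  omega

lemma IsSparse.potential_fineWeight_le (hS : IsSparse G S) :
    potential fineWeight G S ≤ potential coarseWeight G S := by
  refine sum_le_sum fun v _ => ?_
  have := whiteDeg_le_card_closedNhd_sdiff (G := G) (S := S) (v := v)
  have := hS v
  unfold vertexWeight fineWeight coarseWeight
  split_ifs <;> omega

lemma coarseWeight_anti {k l : ℕ} (h : k ≤ l) : coarseWeight k ≤ coarseWeight l := by
  unfold coarseWeight
  split_ifs <;> omega

lemma coarseWeight_le (k : ℕ) : coarseWeight k ≤ 9 := by
  unfold coarseWeight
  split_ifs <;> norm_num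

-- The played vertex drops to weight `0`, from at least `9`, and every other newly dominated vertex
-- from `15` to at most `9`.
lemma vertexWeight_coarseWeight_play_le (hv : ¬ closedNhd G v ⊆ S) (u : α) :
    vertexWeight coarseWeight G (play G S v) u + (if u = v then 9 else 0) +
        (if u ∈ closedNhd G v \ S then 6 else 0) ≤ vertexWeight coarseWeight G S u := by
  have hzero := whiteDeg_play_self (G := G) (S := S) (v := v)
  by_cases hu : u ∈ S
  · rw [vertexWeight_of_mem hu, vertexWeight_of_mem (subset_play _ _ _ hu)]
    have hanti := coarseWeight_anti (whiteDeg_play_le G S v u)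
    obtain rfl | huv := eq_or_ne u v
    · have hpos := whiteDeg_pos_of_mem_of_not_closedNhd_subset hu hv
      simp [hu, hzero, coarseWeight, hpos.ne']
    · simpa [hu, huv] using hanti
  rw [vertexWeight_of_notMem hu]
  by_cases huN : u ∈ closedNhd G v
  · rw [vertexWeight_of_mem (S := play G S v) (mem_union_right _ huN)]
    have hle := coarseWeight_le (whiteDeg G (play G S v) u)
    obtain rfl | huv := eq_or_ne u v
    · simp [hu, huN, hzero, coarseWeight]
    · simp only [huv, huN, hu, mem_sdiff, if_true, if_false, not_false_eq_true, and_self]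
      linarith
  · have huv : u ≠ v := fun h => huN (h ▸ mem_insert_self _ _)
    rw [vertexWeight_of_notMem (by simp [play, hu, huN])]
    simp [huv, huN]

lemma potential_coarseWeight_play_le (hv : ¬ closedNhd G v ⊆ S) :
    potential coarseWeight G (play G S v) + 9 + 6 * #(closedNhd G v \ S) ≤
      potential coarseWeight G S := by
  have hsum := sum_le_sum fun u (_ : u ∈ univ) => vertexWeight_coarseWeight_play_le hv u
  rw [sum_add_distrib, sum_add_distrib, sum_ite_eq' univ v, sum_ite_mem, sum_const] at hsum
  simpa [potential, mul_comm] using hsum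

lemma potential_empty (β : ℕ → ℤ) (G : SimpleGraph α) :
    potential β G ∅ = 15 * Fintype.card α := by
  simp [potential, vertexWeight, mul_comm]

/-- The fine potential once every move dominates at most four new vertices, and the coarse potential
before that. -/
noncomputable def switchedPotential (G : SimpleGraph α) (S : Finset α) : ℤ :=
  if IsSparse G S then potential fineWeight G S else potential coarseWeight G S

lemma switchedPotential_nonneg (G : SimpleGraph α) (S : Finset α) : 0 ≤ switchedPotential G S := by
  unfold switchedPotential
  split_ifs
  exacts [potential_nonneg fineWeight_nonneg G S, potential_nonneg coarseWeight_nonneg G S]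

lemma switchedPotential_le (G : SimpleGraph α) (S : Finset α) :
    switchedPotential G S ≤ potential coarseWeight G S := by
  unfold switchedPotential
  split_ifs with hS
  exacts [hS.potential_fineWeight_le, le_rfl]

lemma IsSparse.switchedPotential_eq (hS : IsSparse G S) :
    switchedPotential G S = potential fineWeight G S :=
  if_pos hS

lemma switchedPotential_of_not_isSparse (hS : ¬ IsSparse G S) :
    switchedPotential G S = potential coarseWeight G S :=
  if_neg hS

lemma forcesDrop_switchedPotential_of_not_isSparse (hS : ¬ IsSparse G S) :
    ForcesDrop G (switchedPotential G) 27 S := by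
  obtain ⟨v, hv⟩ := not_forall.1 hS
  have hlegal : ¬ closedNhd G v ⊆ S := sdiff_nonempty.1 (card_pos.1 (by omega))
  have hmove := potential_coarseWeight_play_le hlegal
  rw [← switchedPotential_of_not_isSparse hS] at hmove
  refine ⟨v, hlegal, ?_, fun u hu => ?_⟩
  · have := switchedPotential_le G (play G S v)
    omega
  · have := card_pos.2 (sdiff_nonempty.2 hu)
    have := potential_coarseWeight_play_le hu
    have := switchedPotential_le G (play G (play G S v) u)
    omega

lemma forcesDrop_switchedPotential (htri : EveryEdgeInTriangle G) (hδ : ∀ v, 2 ≤ G.degree v)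
    (hne : S ≠ univ) : ForcesDrop G (switchedPotential G) 27 S := by
  by_cases hS : IsSparse G S
  · obtain ⟨v, hv, hmove, hreply⟩ :=
      forcesDrop_potential_fineWeight htri hδ hS.whiteDegLE hne
    have hSv := hS.mono (subset_play G S v)
    refine ⟨v, hv, ?_, fun u hu => ?_⟩
    · rwa [hS.switchedPotential_eq, hSv.switchedPotential_eq]
    · rw [hS.switchedPotential_eq, (hSv.mono (subset_play ..)).switchedPotential_eq]
      exact hreply u hu
  · exact forcesDrop_switchedPotential_of_not_isSparse hS

end Coarse

section Game

variable {α : Type} [Fintype α] {H : Finset (Finset α)} {S : Finset α} {v : α}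

/-- The graph on the vertices of a hypergraph in which adjacency is that of the hypergraph. -/
def twoSection {α : Type*} (H : Finset (Finset α)) : SimpleGraph α where
  Adj u v := u ≠ v ∧ ∃ e ∈ H, u ∈ e ∧ v ∈ e
  symm := ⟨fun _ _ h => ⟨h.1.symm, h.2.imp fun _ he => ⟨he.1, he.2.2, he.2.1⟩⟩⟩
  loopless := ⟨fun _ h => h.1 rfl⟩

lemma closedNbhd_eq_closedNhd (H : Finset (Finset α)) (v : α) :
    closedNbhd H v = closedNhd (twoSection H) v := by
  ext u
  simp only [closedNbhd, mem_filter, mem_univ, true_and, mem_closedNhd, twoSection,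
    and_comm (a := v ∈ _)]
  tauto

lemma everyEdgeInTriangle_twoSection {α : Type*} {H : Finset (Finset α)}
    (hcard : ∀ e ∈ H, #e ≠ 2) : EveryEdgeInTriangle (twoSection H) := by
  rintro u v ⟨huv, e, he, hu, hv⟩
  have hlt : #({u, v} : Finset α) < #e := by
    have hle := card_le_card (insert_subset hu (singleton_subset_iff.2 hv))
    have := hcard e he
    rw [card_pair huv] at *
    omega
  obtain ⟨w, hw, hwuv⟩ := exists_mem_notMem_of_card_lt_card hlt
  simp only [mem_insert, mem_singleton, not_or] at hwuv
  exact ⟨w, ⟨Ne.symm hwuv.1, e, he, hu, hw⟩, ⟨Ne.symm hwuv.2, e, he, hv, hw⟩⟩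

lemma domGameVal_univ (H : Finset (Finset α)) (dom : Bool) : domGameVal H dom univ = 0 := by
  rw [domGameVal, dif_neg (by simp)]

lemma domGameVal_true_le (hv : ¬ closedNhd (twoSection H) v ⊆ S) :
    domGameVal H true S ≤ 1 + domGameVal H false (play (twoSection H) S v) := by
  rw [← closedNbhd_eq_closedNhd] at hv
  have hmem : v ∈ univ.filter fun v => ¬ closedNbhd H v ⊆ S := by simpa using hv
  rw [domGameVal, dif_pos ⟨v, hmem⟩, if_pos rfl, play, ← closedNbhd_eq_closedNhd]
  exact Nat.add_le_add_left (inf'_le _ (mem_attach _ ⟨v, hmem⟩)) 1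

lemma domGameVal_false_eq_zero_or (H : Finset (Finset α)) (S : Finset α) :
    domGameVal H false S = 0 ∨ ∃ v, ¬ closedNhd (twoSection H) v ⊆ S ∧
      domGameVal H false S = 1 + domGameVal H true (play (twoSection H) S v) := by
  by_cases h : (univ.filter fun v => ¬ closedNbhd H v ⊆ S).Nonempty
  · right
    obtain ⟨v, -, hv⟩ := exists_mem_eq_sup' (attach_nonempty_iff.2 h) fun v =>
      domGameVal H true (S ∪ closedNbhd H v.1)
    refine ⟨v.1, ?_, ?_⟩
    · rw [← closedNbhd_eq_closedNhd]
      exact (mem_filter.1 v.2).2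
    · rw [domGameVal, dif_pos h, if_neg Bool.false_ne_true, hv, play, ← closedNbhd_eq_closedNhd]
  · left
    rw [domGameVal, dif_neg h]

lemma mul_domGameVal_true_le {Φ : Finset α → ℤ} {c : ℤ} (hc : 0 ≤ c) (hΦ : ∀ S, 0 ≤ Φ S)
    (hdrop : ∀ S, S ≠ univ → ForcesDrop (twoSection H) Φ c S) (S : Finset α) :
    c * domGameVal H true S ≤ Φ S := by
  induction S using WellFoundedGT.induction with
  | ind S ih =>
    obtain rfl | hS := eq_or_ne S univ
    · simpa [domGameVal_univ] using hΦ univ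
    obtain ⟨v, hv, hmove, hreply⟩ := hdrop S hS
    have hle : c * (domGameVal H true S : ℤ) ≤
        c * (1 + domGameVal H false (play (twoSection H) S v)) :=
      mul_le_mul_of_nonneg_left (mod_cast domGameVal_true_le hv) hc
    obtain hend | ⟨u, hu, hval⟩ :=
      domGameVal_false_eq_zero_or H (play (twoSection H) S v)
    · rw [hend] at hle
      push_cast at hle
      linarith [hΦ (play (twoSection H) S v)]
    · have hlt := (subset_play _ S v).trans_lt (left_lt_sup.2 hu)
      have hrec := ih _ hlt
      have := hreply u hu
      rw [hval] at hle
      push_cast at hle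
      change c * (domGameVal H true (play _ (play _ S v) u) : ℤ) ≤ Φ (play _ (play _ S v) u) at hrec
      linarith

lemma mul_domGameVal_false_empty_le (htri : EveryEdgeInTriangle (twoSection H))
    (hδ : ∀ v, 2 ≤ (twoSection H).degree v) :
    27 * (domGameVal H false ∅ : ℤ) ≤ 15 * Fintype.card α := by
  obtain hzero | ⟨u, hu, hval⟩ := domGameVal_false_eq_zero_or H ∅
  · simp [hzero]
  have hfirst := potential_coarseWeight_play_le hu
  rw [potential_empty, sdiff_empty, card_closedNhd] at hfirst
  have hrest := mul_domGameVal_true_le (by norm_num) (switchedPotential_nonneg _)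
    (fun S => forcesDrop_switchedPotential htri hδ) (play (twoSection H) ∅ u)
  have := switchedPotential_le (twoSection H) (play (twoSection H) ∅ u)
  have := hδ u
  omega

end Game

end DominationGame

theorem stmt_13_general (V : Type) [Fintype V] (H : Finset (Finset V))
    (htri : DominationGame.EveryEdgeInTriangle (DominationGame.twoSection H))
    (hisol : ∀ v : V, ∃ u : V, u ≠ v ∧ ∃ e ∈ H, u ∈ e ∧ v ∈ e) :
    (gammaGame' H : ℝ) ≤ 5 / 9 * Fintype.card V := by
  have hδ (v : V) : 2 ≤ (DominationGame.twoSection H).degree v := by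
    obtain ⟨u, huv, e, he, hu, hv⟩ := hisol v
    exact htri.two_le_degree (u := u) ⟨huv.symm, e, he, hv, hu⟩
  have hgame : 27 * (gammaGame' H : ℝ) ≤ 15 * Fintype.card V :=
    mod_cast DominationGame.mul_domGameVal_false_empty_le htri hδ
  linarith

/-- if `H` is a 3-uniform hypergraph on `n` vertices with no isolated
vertices, then the Staller-start game domination number satisfies `γ_g'(H) ≤ (5/9) n`. -/
theorem stmt_13 (V : Type) [Fintype V] (H : Finset (Finset V))
    (huniform : ∀ e ∈ H, e.card = 3)
    (hisol : ∀ v : V, ∃ u : V, u ≠ v ∧ ∃ e ∈ H, u ∈ e ∧ v ∈ e) :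
    (gammaGame' H : ℝ) ≤ 5 / 9 * Fintype.card V :=
  stmt_13_general V H (DominationGame.everyEdgeInTriangle_twoSection fun e he => by
    simp [huniform e he]) hisol
end

section
/- If G is a graph on n vertices with no isolated vertices in which every edge belongs to a triangle, then the Staller-start game domination number satisfies γ_g'(G) ≤ (5/9)·n. -/
attribute [local instance 10] Classical.propDecidable

variable {V : Type}

/-- The closed neighborhood of a vertex in a simple graph, as a finset. -/
noncomputable def gClosedNbhd [Fintype V] (G : SimpleGraph V) (v : V) : Finset V :=
  Finset.univ.filter (fun u => u = v ∨ G.Adj u v)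

/-- Value of the domination game on a simple graph: `S` is the set of vertices already
dominated, `dom = true` iff Dominator is the next player to move.  A legal move is a vertex
dominating at least one new vertex; Dominator minimizes, Staller maximizes the total
number of moves, and both play optimally. -/
noncomputable def gDomGameVal [Fintype V] (G : SimpleGraph V) (dom : Bool) (S : Finset V) :
    ℕ :=
  if h : (Finset.univ.filter fun v => ¬ gClosedNbhd G v ⊆ S).Nonempty then
    1 + (if dom then
        (Finset.univ.filter fun v => ¬ gClosedNbhd G v ⊆ S).attach.inf'
          (Finset.attach_nonempty_iff.mpr h)
          (fun v => gDomGameVal G false (S ∪ gClosedNbhd G v.1))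
      else
        (Finset.univ.filter fun v => ¬ gClosedNbhd G v ⊆ S).attach.sup'
          (Finset.attach_nonempty_iff.mpr h)
          (fun v => gDomGameVal G true (S ∪ gClosedNbhd G v.1)))
  else 0
termination_by (Finset.univ \ S).card
decreasing_by
  · exact card_sdiff_union_lt (Finset.mem_filter.mp v.2).2
  · exact card_sdiff_union_lt (Finset.mem_filter.mp v.2).2

/-- The game domination number of a simple graph (Dominator starts). -/
noncomputable def gGammaGame [Fintype V] (G : SimpleGraph V) : ℕ :=
  gDomGameVal G true ∅

/-- The Staller-start game domination number of a simple graph. -/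
noncomputable def gGammaGame' [Fintype V] (G : SimpleGraph V) : ℕ :=
  gDomGameVal G false ∅

/-!
Dominator's strategy is analysed by discharging. With `U` the set of undominated vertices, an
undominated vertex weighs `40` and a dominated one weighs `0, 16, 20, 24, 25, 26, 27, 27, …`
according to its number of neighbours in `U`; the sum of the weights never increases. When `v` is
played, every newly dominated neighbour `x` of `v` loses weight, and the third vertex of a triangle
on `vx` either is newly dominated as well, which lowers the final weight of `x`, or is already
dominated and loses the undominated neighbour `x`. Counting both effects, Dominator always has a
move after which the weight has dropped by `72` for his move alone and by `144` together with any
reply. Staller's first move removes at least `66`, so `72 * γ ≤ 40 * n + 6` for the length `γ` of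
the game, and `9 * γ ≤ 5 * n` follows because `9 * γ` is an integer.
-/

/-- Every edge belongs to a triangle, the hypothesis on `G` in the theorem. -/
def EdgesInTriangles (G : SimpleGraph V) : Prop :=
  ∀ u v, G.Adj u v → ∃ w, G.Adj u w ∧ G.Adj v w

section Game

open Finset

variable [Fintype V] {G : SimpleGraph V} {U : Finset V} {u v : V}

lemma mem_gClosedNbhd : u ∈ gClosedNbhd G v ↔ u = v ∨ G.Adj u v := by
  simp [gClosedNbhd]

/-- A legal move when `U` is the set of undominated vertices: playing `v` dominates a vertex
of `U`. -/
def IsLegalMove (G : SimpleGraph V) (U : Finset V) (v : V) : Prop :=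
  (U ∩ gClosedNbhd G v).Nonempty

lemma isLegalMove_of_mem (hv : v ∈ U) : IsLegalMove G U v :=
  ⟨v, mem_inter.2 ⟨hv, mem_gClosedNbhd.2 (Or.inl rfl)⟩⟩

lemma not_gClosedNbhd_subset_compl_iff : ¬ gClosedNbhd G v ⊆ Uᶜ ↔ IsLegalMove G U v := by
  simp only [IsLegalMove, not_subset, mem_compl, not_not, Finset.Nonempty, mem_inter, and_comm]

lemma IsLegalMove.sdiff_ssubset (hv : IsLegalMove G U v) : U \ gClosedNbhd G v ⊂ U :=
  ⟨sdiff_subset, fun h => not_disjoint_iff_nonempty_inter.2 hv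
    (disjoint_of_subset_left h sdiff_disjoint)⟩

lemma compl_union_gClosedNbhd : Uᶜ ∪ gClosedNbhd G v = (U \ gClosedNbhd G v)ᶜ := by
  rw [sdiff_eq_inter_compl, compl_inter, compl_compl]

lemma gDomGameVal_compl_empty (dom : Bool) : gDomGameVal G dom (∅ : Finset V)ᶜ = 0 := by
  rw [gDomGameVal, dif_neg]
  simp

lemma gDomGameVal_true_le (hv : IsLegalMove G U v) :
    gDomGameVal G true Uᶜ ≤ 1 + gDomGameVal G false (U \ gClosedNbhd G v)ᶜ := by
  have hmem : v ∈ univ.filter fun v => ¬ gClosedNbhd G v ⊆ Uᶜ :=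
    mem_filter.2 ⟨mem_univ v, not_gClosedNbhd_subset_compl_iff.2 hv⟩
  rw [gDomGameVal, dif_pos ⟨v, hmem⟩, if_pos rfl, ← compl_union_gClosedNbhd]
  gcongr
  exact inf'_le (fun v : {x // x ∈ univ.filter fun v => ¬ gClosedNbhd G v ⊆ Uᶜ} =>
    gDomGameVal G false (Uᶜ ∪ gClosedNbhd G v.1)) (mem_attach _ ⟨v, hmem⟩)

lemma gDomGameVal_false_eq_zero_or (G : SimpleGraph V) (U : Finset V) :
    gDomGameVal G false Uᶜ = 0 ∨ ∃ v, IsLegalMove G U v ∧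
      gDomGameVal G false Uᶜ = 1 + gDomGameVal G true (U \ gClosedNbhd G v)ᶜ := by
  by_cases h : (univ.filter fun v => ¬ gClosedNbhd G v ⊆ Uᶜ).Nonempty
  · obtain ⟨w, -, hw⟩ := exists_mem_eq_sup' (attach_nonempty_iff.2 h)
      fun v => gDomGameVal G true (Uᶜ ∪ gClosedNbhd G v.1)
    refine Or.inr ⟨w, not_gClosedNbhd_subset_compl_iff.1 (mem_filter.1 w.2).2, ?_⟩
    rw [gDomGameVal, dif_pos h, if_neg Bool.false_ne_true, hw, compl_union_gClosedNbhd]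
  · exact Or.inl (by rw [gDomGameVal, dif_neg h])

/-- A move by which Dominator pays `t` per move out of the potential `Φ`: it lowers `Φ` by at least
`t`, and by at least `2 * t` together with any reply of Staller. The first bound is needed only when
the move ends the game. -/
def IsEfficientMove (G : SimpleGraph V) (Φ : Finset V → ℤ) (t : ℤ) (U : Finset V) (v : V) : Prop :=
  IsLegalMove G U v ∧ Φ (U \ gClosedNbhd G v) + t ≤ Φ U ∧
    ∀ w, IsLegalMove G (U \ gClosedNbhd G v) w →
      Φ ((U \ gClosedNbhd G v) \ gClosedNbhd G w) + 2 * t ≤ Φ U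

theorem mul_gDomGameVal_true_le {Φ : Finset V → ℤ} {t : ℤ} (ht : 0 ≤ t) (hΦ : ∀ U, 0 ≤ Φ U)
    (hmove : ∀ U : Finset V, U.Nonempty → ∃ v, IsEfficientMove G Φ t U v) (U : Finset V) :
    t * gDomGameVal G true Uᶜ ≤ Φ U := by
  induction U using Finset.strongInduction with
  | H U ih =>
  rcases U.eq_empty_or_nonempty with rfl | hne
  · rw [gDomGameVal_compl_empty, Nat.cast_zero, mul_zero]
    exact hΦ ∅
  obtain ⟨v, hv, hdrop, hreply⟩ := hmove U hne
  have hval := gDomGameVal_true_le hv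
  rcases gDomGameVal_false_eq_zero_or G (U \ gClosedNbhd G v) with hend | ⟨w, hw, hnext⟩
  · have hle : (gDomGameVal G true Uᶜ : ℤ) ≤ 1 := by lia
    linarith [mul_le_mul_of_nonneg_left hle ht, hΦ (U \ gClosedNbhd G v)]
  · have hle : (gDomGameVal G true Uᶜ : ℤ) ≤
        2 + gDomGameVal G true ((U \ gClosedNbhd G v) \ gClosedNbhd G w)ᶜ := by lia
    linarith [mul_le_mul_of_nonneg_left hle ht, hreply w hw,
      ih _ (hw.sdiff_ssubset.trans hv.sdiff_ssubset)]

end Game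

section Weights

open Finset

variable [Fintype V] {G : SimpleGraph V} {U U' : Finset V} {u v w x y : V}

/-- The number of neighbours of `x` in the set `U` of undominated vertices. -/
noncomputable def undomDegree (G : SimpleGraph V) (U : Finset V) (x : V) : ℕ :=
  #(U ∩ G.neighborFinset x)

lemma undomDegree_mono (h : U' ⊆ U) (x : V) : undomDegree G U' x ≤ undomDegree G U x :=
  card_le_card (inter_subset_inter_right h)

lemma undomDegree_univ (x : V) : undomDegree G univ x = G.degree x := by
  rw [undomDegree, univ_inter, G.card_neighborFinset_eq_degree]

lemma isLegalMove_of_undomDegree_pos (h : 0 < undomDegree G U v) : IsLegalMove G U v := by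
  obtain ⟨u, hu⟩ := card_pos.1 h
  rw [mem_inter, G.mem_neighborFinset] at hu
  exact ⟨u, mem_inter.2 ⟨hu.1, mem_gClosedNbhd.2 (Or.inr hu.2.symm)⟩⟩

lemma IsLegalMove.undomDegree_pos (h : IsLegalMove G U v) (hv : v ∉ U) :
    0 < undomDegree G U v := by
  obtain ⟨u, hu⟩ := h
  rw [mem_inter, mem_gClosedNbhd] at hu
  obtain ⟨huU, rfl | huv⟩ := hu
  · exact absurd huU hv
  · exact card_pos.2 ⟨u, mem_inter.2 ⟨huU, (G.mem_neighborFinset v u).2 huv.symm⟩⟩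

lemma undomDegree_sdiff_add_card_le {D A : Finset V} (hA : A ⊆ D ∩ (U ∩ G.neighborFinset x)) :
    undomDegree G (U \ D) x + #A ≤ undomDegree G U x := by
  rw [undomDegree, undomDegree, ← card_inter_add_card_sdiff (U ∩ G.neighborFinset x) D,
    inter_comm _ D, add_comm, ← sdiff_inter_right_comm]
  exact Nat.add_le_add_right (card_le_card hA) _

lemma undomDegree_sdiff_gClosedNbhd_self (v : V) :
    undomDegree G (U \ gClosedNbhd G v) v = 0 := by
  rw [undomDegree, card_eq_zero, eq_empty_iff_forall_notMem]
  intro u hu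
  simp only [mem_inter, mem_sdiff, mem_gClosedNbhd, G.mem_neighborFinset] at hu
  exact hu.1.2 (Or.inr hu.2.symm)

/-- The weight of a vertex when `U` is the set of undominated vertices: `M` for an undominated
vertex, and `b k` for a dominated vertex with `k` undominated neighbours. -/
noncomputable def vertexWeight (G : SimpleGraph V) (b : ℕ → ℤ) (M : ℤ) (U : Finset V) (x : V) : ℤ :=
  if x ∈ U then M else b (undomDegree G U x)

/-- The total weight of the vertices when `U` is the set of undominated vertices. -/
noncomputable def potential (G : SimpleGraph V) (b : ℕ → ℤ) (M : ℤ) (U : Finset V) : ℤ :=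
  ∑ x, vertexWeight G b M U x

/-- `ρ` is a lower bound for the weight lost per undominated neighbour by a dominated vertex with at
most `e` undominated neighbours, where `c` of the lost neighbours are not counted. -/
def IsDropRate (b : ℕ → ℤ) (c e : ℕ) (ρ : ℤ) : Prop :=
  ∀ j ≤ e, ∀ i ≤ j, ∀ k ≤ j, i + k + c ≤ j → b i + k * ρ ≤ b j

variable {b : ℕ → ℤ} {M ρ : ℤ} {c e r : ℕ}

lemma IsDropRate.add_mul_le (h : IsDropRate b c e ρ) {i j k : ℕ} (hj : j ≤ e)
    (hk : i + k + c ≤ j) : b i + k * ρ ≤ b j :=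
  h j hj i (by lia) k (by lia) hk

lemma IsDropRate.anti {e' : ℕ} (h : IsDropRate b c e ρ) (he : e' ≤ e) : IsDropRate b c e' ρ :=
  fun j hj => h j (hj.trans he)

lemma isDropRate_zero (hb : Monotone b) (c e : ℕ) : IsDropRate b c e 0 :=
  fun j _ i hi k _ _ => by simpa using hb hi

lemma vertexWeight_of_mem (hx : x ∈ U) : vertexWeight G b M U x = M := if_pos hx

lemma vertexWeight_of_notMem (hx : x ∉ U) :
    vertexWeight G b M U x = b (undomDegree G U x) := if_neg hx

lemma vertexWeight_mono (hb : Monotone b) (hM : ∀ n, b n ≤ M) (h : U' ⊆ U) (x : V) :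
    vertexWeight G b M U' x ≤ vertexWeight G b M U x := by
  unfold vertexWeight
  split_ifs with hx' hx hx
  · rfl
  · exact absurd (h hx') hx
  · exact hM _
  · exact hb (undomDegree_mono h x)

lemma potential_nonneg (hb : ∀ n, 0 ≤ b n) (hM : 0 ≤ M) (U : Finset V) :
    0 ≤ potential G b M U := by
  refine sum_nonneg fun x _ => ?_
  unfold vertexWeight
  split_ifs
  exacts [hM, hb _]

lemma potential_univ : potential G b M univ = Fintype.card V * M := by
  simp [potential, vertexWeight]

lemma potential_add_sum_sub_le (hb : Monotone b) (hM : ∀ n, b n ≤ M) (h : U' ⊆ U) (A : Finset V) :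
    potential G b M U' + ∑ x ∈ A, (vertexWeight G b M U x - vertexWeight G b M U' x) ≤
      potential G b M U := by
  have hA : ∑ x ∈ A, (vertexWeight G b M U x - vertexWeight G b M U' x) ≤
      ∑ x, (vertexWeight G b M U x - vertexWeight G b M U' x) :=
    sum_le_sum_of_subset_of_nonneg (subset_univ A)
      fun x _ _ => sub_nonneg.2 (vertexWeight_mono hb hM h x)
  rw [sum_sub_distrib (s := univ)] at hA
  unfold potential
  linarith

lemma vertexWeight_sub_of_isolated (hu : u ∈ gClosedNbhd G v) (huU : u ∈ U)
    (h0 : undomDegree G U u = 0) :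
    vertexWeight G b M U u - vertexWeight G b M (U \ gClosedNbhd G v) u = M - b 0 := by
  have h0' : undomDegree G (U \ gClosedNbhd G v) u = 0 :=
    Nat.le_zero.1 (h0 ▸ undomDegree_mono sdiff_subset u)
  rw [vertexWeight_of_mem huU, vertexWeight_of_notMem fun h => (mem_sdiff.1 h).2 hu, h0']

lemma mul_le_vertexWeight_sub (hρ : IsDropRate b c e ρ) (hU : U' ⊆ U) (hy : y ∉ U)
    (hye : undomDegree G U y ≤ e) {k : ℕ}
    (hk : undomDegree G U' y + k + c ≤ undomDegree G U y) :
    k * ρ ≤ vertexWeight G b M U y - vertexWeight G b M U' y := by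
  rw [vertexWeight_of_notMem hy, vertexWeight_of_notMem fun h => hy (hU h)]
  linarith [hρ.add_mul_le hye hk]

/-- All neighbours of a vertex without undominated neighbours are dominated, and each of them loses
an undominated neighbour. -/
theorem potential_add_le_of_isolated (hb : Monotone b) (hM : ∀ n, b n ≤ M)
    (hρ : IsDropRate b 0 e ρ) (he : ∀ y ∉ U, undomDegree G U y ≤ e) (huU : u ∈ U)
    (hu : u ∈ gClosedNbhd G v) (h0 : undomDegree G U u = 0) :
    potential G b M (U \ gClosedNbhd G v) + (M - b 0 + G.degree u * ρ) ≤ potential G b M U := by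
  have hnbr : ∀ y ∈ G.neighborFinset u, ρ ≤
      vertexWeight G b M U y - vertexWeight G b M (U \ gClosedNbhd G v) y := by
    intro y hy
    have hyU : y ∉ U := fun h => by
      rw [undomDegree, card_eq_zero] at h0
      exact notMem_empty y (h0 ▸ mem_inter.2 ⟨h, hy⟩)
    have hdeg := undomDegree_sdiff_add_card_le (G := G) (U := U) (D := gClosedNbhd G v) (A := {u})
      (x := y) (by simpa [hu, huU, G.adj_comm] using hy)
    simpa using
      mul_le_vertexWeight_sub (k := 1) hρ sdiff_subset hyU (he y hyU) (by simpa using hdeg)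
  refine le_trans ?_ (potential_add_sum_sub_le hb hM
    (sdiff_subset (s := U) (t := gClosedNbhd G v)) (insert u (G.neighborFinset u)))
  rw [sum_insert (G.notMem_neighborFinset_self u), vertexWeight_sub_of_isolated hu huU h0]
  have hsum := card_nsmul_le_sum _ _ _ hnbr
  rw [nsmul_eq_mul, G.card_neighborFinset_eq_degree] at hsum
  linarith

lemma EdgesInTriangles.two_le_degree (htri : EdgesInTriangles G) (h : G.Adj u v) :
    2 ≤ G.degree u := by
  obtain ⟨w, huw, hvw⟩ := htri u v h
  rw [← G.card_neighborFinset_eq_degree, ← card_pair hvw.ne]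
  exact card_le_card (by simp [insert_subset_iff, h, huw])

lemma undomDegree_sdiff_gClosedNbhd_add_le {B : Finset V} (hvx : G.Adj v x)
    (hBv : B ⊆ U ∩ G.neighborFinset v) (hBx : B ⊆ G.neighborFinset x)
    (hc : c = if v ∈ U then 1 else 0) :
    undomDegree G (U \ gClosedNbhd G v) x + #B + c ≤ undomDegree G U x := by
  have hB : B ⊆ gClosedNbhd G v ∩ (U ∩ G.neighborFinset x) := fun u hu => by
    have hu' := mem_inter.1 (hBv hu)
    rw [G.mem_neighborFinset] at hu'
    exact mem_inter.2 ⟨mem_gClosedNbhd.2 (Or.inr hu'.2.symm), mem_inter.2 ⟨hu'.1, hBx hu⟩⟩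
  split_ifs at hc with hv
  · have hvB : v ∉ B := fun h => G.notMem_neighborFinset_self v (mem_inter.1 (hBv h)).2
    have hv' : v ∈ gClosedNbhd G v ∩ (U ∩ G.neighborFinset x) := by
      simp [mem_gClosedNbhd, hv, hvx.symm]
    have h := undomDegree_sdiff_add_card_le (insert_subset hv' hB)
    rwa [card_insert_of_notMem hvB, ← add_assoc, ← hc] at h
  · simpa [hc] using undomDegree_sdiff_add_card_le hB

lemma vertexWeight_sub_of_played (G : SimpleGraph V) (b : ℕ → ℤ) (M : ℤ) (U : Finset V) (v : V) :
    vertexWeight G b M U v - vertexWeight G b M (U \ gClosedNbhd G v) v =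
      vertexWeight G b M U v - b 0 := by
  have hv : v ∉ U \ gClosedNbhd G v := fun h =>
    (mem_sdiff.1 h).2 (mem_gClosedNbhd.2 (Or.inl rfl))
  rw [vertexWeight_of_notMem hv, undomDegree_sdiff_gClosedNbhd_self]

lemma le_vertexWeight_sub_of_newly_dominated (hb : Monotone b)
    (hc : c = if v ∈ U then 1 else 0) (hxU : x ∈ U) (hxr : undomDegree G U x ≤ r + c)
    (hρ : ∀ i < r, b i + ρ ≤ b r) (hvx : G.Adj v x) (hvw : G.Adj v w) (hxw : G.Adj x w) :
    M - b r + (if w ∈ U then ρ else 0) ≤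
      vertexWeight G b M U x - vertexWeight G b M (U \ gClosedNbhd G v) x := by
  have hx : x ∉ U \ gClosedNbhd G v := fun h =>
    (mem_sdiff.1 h).2 (mem_gClosedNbhd.2 (Or.inr hvx.symm))
  rw [vertexWeight_of_mem hxU, vertexWeight_of_notMem hx]
  split_ifs with hwU
  · have hdeg := undomDegree_sdiff_gClosedNbhd_add_le (B := {w}) hvx
      (by simp [hwU, hvw]) (by simp [hxw]) hc
    rw [card_singleton] at hdeg
    linarith [hρ (undomDegree G (U \ gClosedNbhd G v) x) (by lia)]
  · have hdeg := undomDegree_sdiff_gClosedNbhd_add_le (B := ∅) hvx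
      (empty_subset (U ∩ G.neighborFinset v)) (empty_subset _) hc
    have hle : b (undomDegree G (U \ gClosedNbhd G v) x) ≤ b r := hb (by lia)
    linarith

lemma card_mul_le_vertexWeight_sub {B : Finset V} (hb : Monotone b) (hM : ∀ n, b n ≤ M)
    (hc : c = if v ∈ U then 1 else 0) (hρ : IsDropRate b c e ρ) (hy : y ∉ U)
    (hye : undomDegree G U y ≤ e) (hBv : B ⊆ U ∩ G.neighborFinset v)
    (hBy : ∀ x ∈ B, G.Adj v y ∧ G.Adj y x) :
    #B * ρ ≤ vertexWeight G b M U y - vertexWeight G b M (U \ gClosedNbhd G v) y := by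
  rcases B.eq_empty_or_nonempty with rfl | ⟨x₀, hx₀⟩
  · rw [card_empty, Nat.cast_zero, zero_mul]
    exact sub_nonneg.2 (vertexWeight_mono hb hM sdiff_subset y)
  · exact mul_le_vertexWeight_sub hρ sdiff_subset hy hye
      (undomDegree_sdiff_gClosedNbhd_add_le (hBy x₀ hx₀).1 hBv
        (fun x hx => (G.mem_neighborFinset y x).2 (hBy x hx).2) hc)

lemma sum_ite_add_sum_card_fiber_mul {α β : Type*} [DecidableEq β] {X : Finset α} {S T : Finset β}
    {f : α → β} (hST : Disjoint S T) (hf : ∀ x ∈ X, f x ∈ S ∪ T) (ρ : ℤ) :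
    ∑ x ∈ X, (if f x ∈ S then ρ else 0) + ∑ y ∈ T, #{x ∈ X | f x = y} * ρ = #X * ρ := by
  have hfiber : ∑ y ∈ T, #{x ∈ X | f x = y} * ρ = ∑ x ∈ X, if f x ∈ T then ρ else 0 := by
    simp only [card_eq_sum_ones, sum_filter, Nat.cast_sum, sum_mul]
    rw [sum_comm]
    simp [ite_mul]
  rw [hfiber, ← sum_add_distrib, ← nsmul_eq_mul, ← sum_const]
  refine sum_congr rfl fun x hx => ?_
  rcases mem_union.1 (hf x hx) with h | h
  · rw [if_pos h, if_neg (disjoint_left.1 hST h), add_zero]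
  · rw [if_neg (disjoint_right.1 hST h), if_pos h, zero_add]

/-- Each newly dominated neighbour `x` of `v` loses `M - b r`, and `ρ` more is lost by `x` or by the
third vertex of a triangle on `vx`. The number `c` accounts for `v` itself, which its neighbours
lose as an undominated neighbour if it was one. -/
theorem potential_sdiff_gClosedNbhd_add_le (htri : EdgesInTriangles G) (hb : Monotone b)
    (hM : ∀ n, b n ≤ M) (hc : c = if v ∈ U then 1 else 0)
    (hr : ∀ x ∈ U, undomDegree G U x ≤ r + c) (he : ∀ y ∉ U, undomDegree G U y ≤ e)
    (hρr : ∀ i < r, b i + ρ ≤ b r) (hρ : IsDropRate b c e ρ) :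
    potential G b M (U \ gClosedNbhd G v) +
        (vertexWeight G b M U v - b 0 + undomDegree G U v * (M - b r + ρ)) ≤
      potential G b M U := by
  have : Nonempty V := ⟨v⟩
  choose! f hvf hxf using htri v
  set X := U ∩ G.neighborFinset v with hX
  have hXv : ∀ x ∈ X, x ∈ U ∧ G.Adj v x := fun x hx => by simpa [hX] using hx
  set loss := fun x => vertexWeight G b M U x - vertexWeight G b M (U \ gClosedNbhd G v) x
  have hlossX : ∀ x ∈ X, M - b r + (if f x ∈ U then ρ else 0) ≤ loss x := fun x hx =>
    le_vertexWeight_sub_of_newly_dominated hb hc (hXv x hx).1 (hr x (hXv x hx).1) hρr (hXv x hx).2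
      (hvf x (hXv x hx).2) (hxf x (hXv x hx).2)
  have hlossY : ∀ y ∈ Uᶜ.erase v, #{x ∈ X | f x = y} * ρ ≤ loss y := fun y hy =>
    have hyU : y ∉ U := mem_compl.1 (mem_of_mem_erase hy)
    card_mul_le_vertexWeight_sub hb hM hc hρ hyU (he y hyU) (filter_subset _ X) fun x hx => by
      obtain ⟨hxX, rfl⟩ := mem_filter.1 hx
      exact ⟨hvf x (hXv x hxX).2, (hxf x (hXv x hxX).2).symm⟩
  have hvXY : v ∉ X ∪ Uᶜ.erase v := by simp [hX]
  have hXY : Disjoint X (Uᶜ.erase v) :=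
    (disjoint_compl_right.mono_left inter_subset_left).mono_right (erase_subset v _)
  have hcount := sum_ite_add_sum_card_fiber_mul (X := X) (f := f) (S := U) (T := Uᶜ.erase v)
    (disjoint_compl_right.mono_right (erase_subset v _))
    (fun x hx => by simp [em, (hvf x (hXv x hx).2).ne']) ρ
  have hsumX := sum_le_sum hlossX
  have hsumY := sum_le_sum hlossY
  have htotal := potential_add_sum_sub_le (G := G) hb hM
    (sdiff_subset (s := U) (t := gClosedNbhd G v)) (insert v (X ∪ Uᶜ.erase v))
  rw [sum_insert hvXY, sum_union hXY, vertexWeight_sub_of_played] at htotal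
  rw [sum_add_distrib, sum_const, nsmul_eq_mul] at hsumX
  have hsplit : (undomDegree G U v : ℤ) * (M - b r + ρ) = #X * (M - b r) + #X * ρ := mul_add _ _ _
  linarith

theorem IsLegalMove.potential_add_le (htri : EdgesInTriangles G) (hdeg : ∀ x, 0 < G.degree x)
    (hb : Monotone b) (hM : ∀ n, b n ≤ M) (hb0 : b 0 = 0) (hb1 : 2 * b 1 ≤ M)
    (hr : ∀ x ∈ U, undomDegree G U x ≤ r + 1) (he : ∀ y ∉ U, undomDegree G U y ≤ e)
    (hre : r + 1 ≤ e) (hρ0 : 0 ≤ ρ) (hρ : IsDropRate b 0 e ρ) (hv : IsLegalMove G U v) :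
    potential G b M (U \ gClosedNbhd G v) + (M + b 1 - b (r + 1) + ρ) ≤ potential G b M U := by
  have hρ1 : ρ ≤ b 1 := by
    simpa [hb0] using hρ.add_mul_le (i := 0) (j := 1) (k := 1) (by lia) le_rfl
  have hbr : b 1 ≤ b (r + 1) := hb (by lia)
  by_cases hvU : v ∈ U
  · rcases Nat.eq_zero_or_pos (undomDegree G U v) with h0 | hpos
    · have hdrop := potential_add_le_of_isolated (M := M) hb hM hρ he hvU
        (mem_gClosedNbhd.2 (Or.inl rfl)) h0
      have hdeg' : (1 : ℤ) ≤ G.degree v := by exact_mod_cast hdeg v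
      nlinarith
    · have hdrop := potential_sdiff_gClosedNbhd_add_le (c := 1) (r := r) (ρ := 0) htri hb hM
        (by rw [if_pos hvU]) hr he (fun i hi => by simpa using hb hi.le) (isDropRate_zero hb 1 e)
      rw [vertexWeight_of_mem hvU] at hdrop
      have hpos' : (1 : ℤ) ≤ undomDegree G U v := by exact_mod_cast hpos
      have hbr' : b r ≤ b (r + 1) := hb (by lia)
      nlinarith [hM r, hpos']
  · have hpos := hv.undomDegree_pos hvU
    have hdrop := potential_sdiff_gClosedNbhd_add_le (c := 0) (r := r + 1) htri hb hM
      (by rw [if_neg hvU]) hr he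
      (fun i hi => by simpa using hρ.add_mul_le (k := 1) hre (by lia)) hρ
    rw [vertexWeight_of_notMem hvU] at hdrop
    have hpos' : (1 : ℤ) ≤ undomDegree G U v := by exact_mod_cast hpos
    have hb1' : b 1 ≤ b (undomDegree G U v) := hb hpos
    nlinarith [hM (r + 1), hpos']

end Weights

section Strategy

/-- The weight of a dominated vertex with a given number of undominated neighbours, when an
undominated vertex weighs `40`. The values are chosen so that Dominator's moves below always remove
`144` together with any reply; several of these bounds are attained. -/
def dominatedWeight : ℕ → ℤ
  | 0 => 0
  | 1 => 16
  | 2 => 20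
  | 3 => 24
  | 4 => 25
  | 5 => 26
  | _ + 6 => 27

lemma dominatedWeight_mono : Monotone dominatedWeight := by
  refine monotone_nat_of_le_succ ?_
  rintro (_ | _ | _ | _ | _ | _ | _) <;> simp [dominatedWeight]

lemma dominatedWeight_nonneg (n : ℕ) : 0 ≤ dominatedWeight n :=
  dominatedWeight_mono n.zero_le

lemma dominatedWeight_of_six_le {n : ℕ} (h : 6 ≤ n) : dominatedWeight n = 27 := by
  obtain ⟨m, rfl⟩ := Nat.exists_eq_add_of_le' h
  rfl

lemma dominatedWeight_le_twentySeven (n : ℕ) : dominatedWeight n ≤ 27 :=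
  (dominatedWeight_mono (Nat.le_add_right n 6)).trans
    (dominatedWeight_of_six_le (Nat.le_add_left 6 n)).le

lemma dominatedWeight_le_forty (n : ℕ) : dominatedWeight n ≤ 40 :=
  (dominatedWeight_le_twentySeven n).trans (by norm_num)

lemma dominatedWeight_isDropRate_four : IsDropRate dominatedWeight 0 3 4 := by
  unfold IsDropRate
  decide

lemma dominatedWeight_isDropRate_one : IsDropRate dominatedWeight 0 6 1 := by
  unfold IsDropRate
  decide

lemma exists_isDropRate_undominated_move (r : ℕ) :
    ∃ ρ σ : ℤ, (∀ i < r, dominatedWeight i + ρ ≤ dominatedWeight r) ∧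
      IsDropRate dominatedWeight 1 (r + 2) ρ ∧ 0 ≤ σ ∧ IsDropRate dominatedWeight 0 (r + 2) σ ∧
      72 ≤ 40 + (r + 1) * (40 - dominatedWeight r + ρ) ∧
      144 ≤ 40 + (r + 1) * (40 - dominatedWeight r + ρ) + (56 - dominatedWeight (r + 1) + σ) := by
  unfold IsDropRate
  rcases Nat.lt_or_ge r 5 with h | h
  · interval_cases r
    · exact ⟨20, 4, by decide⟩
    · exact ⟨8, 4, by decide⟩
    · exact ⟨4, 1, by decide⟩
    · exact ⟨2, 1, by decide⟩
    · exact ⟨1, 1, by decide⟩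
  · have hlast := dominatedWeight_le_twentySeven (r + 1)
    have hdrop : 118 ≤ 40 + ((r : ℤ) + 1) * (40 - dominatedWeight r + 0) := by
      rcases h.eq_or_lt with rfl | h6
      · decide
      · have h6' : (6 : ℤ) ≤ r := by exact_mod_cast h6
        nlinarith [dominatedWeight_le_twentySeven r, h6']
    exact ⟨0, 0, fun i hi => by simpa using dominatedWeight_mono hi.le,
      isDropRate_zero dominatedWeight_mono 1 _, le_rfl,
      isDropRate_zero dominatedWeight_mono 0 _, by linarith, by linarith⟩

lemma exists_isDropRate_dominated_move {r e : ℕ} (hre : r + 3 ≤ e) :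
    ∃ σ : ℤ, 0 ≤ σ ∧ IsDropRate dominatedWeight 0 e σ ∧
      72 ≤ dominatedWeight e + e * (40 - dominatedWeight (r + 1) + σ) ∧
      144 ≤ dominatedWeight e + e * (40 - dominatedWeight (r + 1) + σ) +
        (56 - dominatedWeight (r + 1) + σ) := by
  rcases Nat.lt_or_ge 6 e with h6 | h6
  · have hr := dominatedWeight_le_twentySeven (r + 1)
    have hdrop : 118 ≤ dominatedWeight e + e * (40 - dominatedWeight (r + 1) + 0) := by
      have h7 : (7 : ℤ) ≤ e := by exact_mod_cast h6
      rw [dominatedWeight_of_six_le h6.le]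
      nlinarith [h7]
    exact ⟨0, le_rfl, isDropRate_zero dominatedWeight_mono 0 e, by linarith, by linarith⟩
  rcases Nat.lt_or_ge 3 e with h3 | h3
  · refine ⟨1, zero_le_one, dominatedWeight_isDropRate_one.anti h6, ?_⟩
    have hr : r ≤ 3 := by lia
    interval_cases e <;> interval_cases r <;> first | decide | lia
  · obtain ⟨rfl, rfl⟩ : r = 0 ∧ e = 3 := by lia
    exact ⟨4, by norm_num, dominatedWeight_isDropRate_four, by decide⟩

variable [Fintype V] {G : SimpleGraph V} {U : Finset V} {v : V} {r e : ℕ}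

/-- The potential of the discharging argument. -/
noncomputable abbrev gamePotential (G : SimpleGraph V) (U : Finset V) : ℤ :=
  potential G dominatedWeight 40 U

lemma isEfficientMove_of_le {a σ : ℤ} (htri : EdgesInTriangles G) (hdeg : ∀ x, 0 < G.degree x)
    (hr : ∀ x ∈ U, undomDegree G U x ≤ r + 1) (he : ∀ y ∉ U, undomDegree G U y ≤ e)
    (hre : r + 1 ≤ e) (hσ0 : 0 ≤ σ) (hσ : IsDropRate dominatedWeight 0 e σ)
    (hv : IsLegalMove G U v)
    (hdrop : gamePotential G (U \ gClosedNbhd G v) + a ≤ gamePotential G U)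
    (hmove : 72 ≤ a) (hround : 144 ≤ a + (56 - dominatedWeight (r + 1) + σ)) :
    IsEfficientMove G (gamePotential G) 72 U v := by
  refine ⟨hv, by linarith, fun w hw => ?_⟩
  have hmono := undomDegree_mono (G := G) (Finset.sdiff_subset (s := U) (t := gClosedNbhd G v))
  have hreply := hw.potential_add_le htri hdeg dominatedWeight_mono dominatedWeight_le_forty rfl
    (by decide) (fun x hx => (hmono x).trans (hr x (Finset.mem_sdiff.1 hx).1))
    (fun y _ => (hmono y).trans (if hy : y ∈ U then (hr y hy).trans hre else he y hy)) hre hσ0 hσ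
  have hone : dominatedWeight 1 = 16 := rfl
  linarith

lemma isEfficientMove_of_mem (htri : EdgesInTriangles G) (hdeg : ∀ x, 0 < G.degree x)
    (hr : ∀ x ∈ U, undomDegree G U x ≤ r + 1) (he : ∀ y ∉ U, undomDegree G U y ≤ r + 2)
    (hv : v ∈ U) (hvr : undomDegree G U v = r + 1) :
    IsEfficientMove G (gamePotential G) 72 U v := by
  obtain ⟨ρ, σ, hρr, hρ, hσ0, hσ, hmove, hround⟩ := exists_isDropRate_undominated_move r
  have hdrop := potential_sdiff_gClosedNbhd_add_le htri dominatedWeight_mono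
    dominatedWeight_le_forty (if_pos hv).symm hr he hρr hρ
  have hzero : dominatedWeight 0 = 0 := rfl
  rw [vertexWeight_of_mem hv, hvr, hzero, sub_zero, Nat.cast_succ] at hdrop
  exact isEfficientMove_of_le htri hdeg hr he (by lia) hσ0 hσ (isLegalMove_of_mem hv) hdrop hmove
    hround

lemma isEfficientMove_of_notMem (htri : EdgesInTriangles G) (hdeg : ∀ x, 0 < G.degree x)
    (hr : ∀ x ∈ U, undomDegree G U x ≤ r + 1)
    (he : ∀ y ∉ U, undomDegree G U y ≤ undomDegree G U v) (hv : v ∉ U)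
    (hre : r + 3 ≤ undomDegree G U v) : IsEfficientMove G (gamePotential G) 72 U v := by
  obtain ⟨σ, hσ0, hσ, hmove, hround⟩ := exists_isDropRate_dominated_move hre
  have hdrop := potential_sdiff_gClosedNbhd_add_le htri dominatedWeight_mono
    dominatedWeight_le_forty (if_neg hv).symm hr he
    (fun i hi => by simpa using hσ.add_mul_le (k := 1) (by lia : r + 1 ≤ _) (by lia)) hσ
  have hzero : dominatedWeight 0 = 0 := rfl
  rw [vertexWeight_of_notMem hv, hzero, sub_zero] at hdrop
  exact isEfficientMove_of_le htri hdeg hr he (by lia) hσ0 hσ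
    (isLegalMove_of_undomDegree_pos (by lia)) hdrop hmove hround

lemma isEfficientMove_of_undomDegree_eq_two (htri : EdgesInTriangles G)
    (hdeg : ∀ x, 0 < G.degree x) (hU : ∀ x ∈ U, undomDegree G U x = 0)
    (he : ∀ y ∉ U, undomDegree G U y ≤ 2) (hv : v ∉ U) (hv2 : undomDegree G U v = 2) :
    IsEfficientMove G (gamePotential G) 72 U v := by
  have hσ : IsDropRate dominatedWeight 0 2 4 := dominatedWeight_isDropRate_four.anti (by norm_num)
  have hdrop := potential_sdiff_gClosedNbhd_add_le htri dominatedWeight_mono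
    dominatedWeight_le_forty (if_neg hv).symm (r := 0) (fun x hx => (hU x hx).le) he (by simp) hσ
  rw [vertexWeight_of_notMem hv, hv2] at hdrop
  exact isEfficientMove_of_le htri hdeg (r := 0) (fun x hx => by simp [hU x hx]) he (by norm_num)
    (by norm_num) hσ (isLegalMove_of_undomDegree_pos (by lia)) hdrop (by decide) (by decide)

/-- Here every undominated vertex has at least two neighbours of weight `16` which are about to
weigh `0`. -/
lemma IsLegalMove.potential_add_le_of_undomDegree_le_one (hdeg : ∀ x, 2 ≤ G.degree x)
    (hU : ∀ x ∈ U, undomDegree G U x = 0) (he : ∀ y ∉ U, undomDegree G U y ≤ 1)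
    (hv : IsLegalMove G U v) :
    gamePotential G (U \ gClosedNbhd G v) + 72 ≤ gamePotential G U := by
  obtain ⟨u, hu⟩ := hv
  obtain ⟨huU, huv⟩ := Finset.mem_inter.1 hu
  have hdrop := potential_add_le_of_isolated (ρ := 16) dominatedWeight_mono
    dominatedWeight_le_forty (by unfold IsDropRate; decide) he huU huv (hU u huU)
  have hzero : dominatedWeight 0 = 0 := rfl
  have hdeg' : (2 : ℤ) ≤ G.degree u := by exact_mod_cast hdeg u
  linarith

lemma IsLegalMove.isEfficientMove_of_undomDegree_le_one (hdeg : ∀ x, 2 ≤ G.degree x)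
    (hU : ∀ x ∈ U, undomDegree G U x = 0) (he : ∀ y ∉ U, undomDegree G U y ≤ 1)
    (hv : IsLegalMove G U v) : IsEfficientMove G (gamePotential G) 72 U v := by
  have hdrop := hv.potential_add_le_of_undomDegree_le_one hdeg hU he
  have hmono := undomDegree_mono (G := G) (Finset.sdiff_subset (s := U) (t := gClosedNbhd G v))
  refine ⟨hv, hdrop, fun w hw => ?_⟩
  have hreply := hw.potential_add_le_of_undomDegree_le_one hdeg
    (fun x hx => Nat.le_zero.1 (hU x (Finset.mem_sdiff.1 hx).1 ▸ hmono x))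
    (fun y _ => (hmono y).trans (if hy : y ∈ U then (hU y hy).trans_le zero_le_one else he y hy))
  linarith

theorem exists_isEfficientMove (htri : EdgesInTriangles G) (hdeg : ∀ x, 2 ≤ G.degree x)
    (hU : U.Nonempty) : ∃ v, IsEfficientMove G (gamePotential G) 72 U v := by
  have hdeg' : ∀ x, 0 < G.degree x := fun x => two_pos.trans_le (hdeg x)
  obtain ⟨v, hvU, hvmax⟩ := U.exists_max_image (undomDegree G U) hU
  by_cases hflat : ∀ y ∉ U, undomDegree G U y ≤ undomDegree G U v + 1
  · rcases hd : undomDegree G U v with _ | r <;> rw [hd] at hvmax hflat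
    · exact ⟨v, (isLegalMove_of_mem hvU).isEfficientMove_of_undomDegree_le_one hdeg
        (fun x hx => Nat.le_zero.1 (hvmax x hx)) hflat⟩
    · exact ⟨v, isEfficientMove_of_mem htri hdeg' hvmax hflat hvU hd⟩
  push Not at hflat
  obtain ⟨y₀, hy₀U, hy₀⟩ := hflat
  obtain ⟨y, hyU, hymax⟩ :=
    Uᶜ.exists_max_image (undomDegree G U) ⟨y₀, Finset.mem_compl.2 hy₀U⟩
  simp only [Finset.mem_compl] at hyU hymax
  have hvy : undomDegree G U v + 1 < undomDegree G U y := hy₀.trans_le (hymax y₀ hy₀U)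
  refine ⟨y, ?_⟩
  by_cases htwo : undomDegree G U v = 0 ∧ undomDegree G U y = 2
  · exact isEfficientMove_of_undomDegree_eq_two htri hdeg'
      (fun x hx => Nat.le_zero.1 (htwo.1 ▸ hvmax x hx)) (htwo.2 ▸ hymax) hyU htwo.2
  · exact isEfficientMove_of_notMem htri hdeg' (r := undomDegree G U v - 1)
      (fun x hx => (hvmax x hx).trans (by lia)) hymax hyU (by lia)

lemma gamePotential_first_move_add_le (htri : EdgesInTriangles G) (hdeg : 2 ≤ G.degree v) :
    gamePotential G (Finset.univ \ gClosedNbhd G v) + 66 ≤ 40 * Fintype.card V := by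
  have hdrop := potential_sdiff_gClosedNbhd_add_le (U := Finset.univ) (v := v) (c := 1)
    (r := Fintype.card V) (e := 0) (ρ := 0) htri dominatedWeight_mono dominatedWeight_le_forty
    (by simp) (fun x _ => (Finset.card_le_univ _).trans (Nat.le_succ _)) (by simp)
    (fun i hi => by simpa using dominatedWeight_mono hi.le)
    (isDropRate_zero dominatedWeight_mono 1 0)
  have hzero : dominatedWeight 0 = 0 := rfl
  rw [vertexWeight_of_mem (Finset.mem_univ v), undomDegree_univ, potential_univ, hzero] at hdrop
  have hdeg' : (2 : ℤ) ≤ G.degree v := by exact_mod_cast hdeg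
  nlinarith [dominatedWeight_le_twentySeven (Fintype.card V), hdeg']

theorem nine_mul_gGammaGame'_le (htri : EdgesInTriangles G) (hdeg : ∀ x, 2 ≤ G.degree x) :
    9 * gGammaGame' G ≤ 5 * Fintype.card V := by
  have hbound := mul_gDomGameVal_true_le (G := G) (by norm_num)
    (potential_nonneg dominatedWeight_nonneg (by norm_num))
    (fun U => exists_isEfficientMove (U := U) htri hdeg)
  have hstaller := gDomGameVal_false_eq_zero_or G Finset.univ
  rw [Finset.compl_univ] at hstaller
  rw [gGammaGame']
  rcases hstaller with hend | ⟨v, -, hnext⟩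
  · lia
  · have hfirst := gamePotential_first_move_add_le htri (hdeg v)
    have hrest := hbound (Finset.univ \ gClosedNbhd G v)
    lia

end Strategy

/-- if `G` is a graph on `n` vertices with no isolated vertices in which
every edge belongs to a triangle, then the Staller-start game domination number satisfies
`γ_g'(G) ≤ (5/9) n`. -/
theorem stmt_14 (V : Type) [Fintype V] (G : SimpleGraph V)
    (hisol : ∀ v : V, ∃ u : V, G.Adj u v)
    (htri : ∀ u v : V, G.Adj u v → ∃ w : V, G.Adj u w ∧ G.Adj v w) :
    (gGammaGame' G : ℝ) ≤ 5 / 9 * Fintype.card V := by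
  have hdeg : ∀ v, 2 ≤ G.degree v := fun v =>
    let ⟨_, huv⟩ := hisol v
    EdgesInTriangles.two_le_degree htri huv.symm
  have h : (9 : ℝ) * gGammaGame' G ≤ 5 * Fintype.card V := by
    exact_mod_cast nine_mul_gGammaGame'_le htri hdeg
  linarith
end
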